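/- arXiv:2504.00331 — 2 statements merged into one kernel-verified Lean document; each statement's English description precedes it below -/
import Mathlib

section
/- There exists a constant c₂ such that for every ε > 0, one has ∑_{m₁m₂ ≤ x, m₁m₂ a perfect square} s(m₁,m₂) = c₂·x + O_ε(x^{19/28+ε}) as x → ∞, where the sum is over pairs of positive integers (m₁,m₂) with m₁m₂ ≤ x and m₁m₂ a perfect square. -/
/-!
By Goursat's lemma a subgroup of `G × K` is a triple `A ≤ G`, `B ≤ K`, `f : A → K ⧸ B`, so for
cyclic groups `s(m, n) = ∑_{d ∣ m} ∑_{e ∣ n} gcd(d, e) = ∑_{g ∣ gcd(m, n)} φ(g) τ(m / g) τ(n / g)`.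
If `mn = k²` then `g ∣ k`, and `k = gj` gives `∑_{mn = k²} s(m, n) = (φ * r)(k)` with
`r(j) = ∑_{ab = j²} τ(a) τ(b) = j ^ o(1)`. As `φ = μ * id`, this is `f * id` with `f = μ * r`,
which is again `n ^ o(1)`. Hence
`∑_{k ≤ √x} (f * id)(k) = ∑_n f(n) (1 + 2 + ⋯ + ⌊√x / n⌋)`; replacing each inner sum by
`x / (2 n²)` costs `O((√x / n) ^ α)` for every `1 ≤ α ≤ 2`, and `∑ |f(n)| n ^ (-α)` converges as
soon as `α > 1`.
-/

open scoped Classical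

/-- `numSubgroups m₁ m₂` is the number of subgroups of the additive group
`ℤ_{m₁} × ℤ_{m₂}`. -/
noncomputable def numSubgroups (m₁ m₂ : ℕ) : ℕ :=
  Nat.card (AddSubgroup (ZMod m₁ × ZMod m₂))

/-- `T₂ x = ∑_{m₁ m₂ ≤ x, m₁ m₂ a perfect square} s(m₁, m₂)`, the sum over pairs of
positive integers `(m₁, m₂)` with `m₁ m₂ ≤ x` and `m₁ m₂` a perfect square. -/
noncomputable def T₂ (x : ℝ) : ℕ :=
  ∑ p ∈ (Finset.Icc 1 ⌊x⌋₊ ×ˢ Finset.Icc 1 ⌊x⌋₊).filter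
      (fun p => p.1 * p.2 ≤ ⌊x⌋₊ ∧ ∃ n : ℕ, p.1 * p.2 = n ^ 2),
    numSubgroups p.1 p.2

open ArithmeticFunction
open scoped ArithmeticFunction.sigma ArithmeticFunction.Moebius ArithmeticFunction.zeta

section Goursat

variable {G K : Type*} [AddGroup G] [AddCommGroup K]

/-- The graph of a homomorphism `f : A → K ⧸ B` pulled back to `G × K`, that is
`{(x, y) | x ∈ A ∧ f x = y + B}`. By Goursat's lemma every subgroup of `G × K` is of this form for a
unique triple `(A, B, f)`. -/
def graphModulo {A : AddSubgroup G} {B : AddSubgroup K} (f : A →+ K ⧸ B) :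
    AddSubgroup (G × K) :=
  ((f.comp (AddMonoidHom.fst A K)).eqLocus
    ((QuotientAddGroup.mk' B).comp (AddMonoidHom.snd A K))).map
      (A.subtype.prodMap (AddMonoidHom.id K))

theorem mem_graphModulo {A : AddSubgroup G} {B : AddSubgroup K} {f : A →+ K ⧸ B} {x : G} {y : K} :
    (x, y) ∈ graphModulo f ↔ ∃ hx : x ∈ A, f ⟨x, hx⟩ = y := by
  constructor
  · rintro ⟨⟨⟨_, hx⟩, _⟩, h, ⟨⟩⟩
    exact ⟨hx, h⟩
  · rintro ⟨hx, h⟩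
    exact ⟨(⟨x, hx⟩, y), h, rfl⟩

theorem mem_iff_exists_mem_graphModulo {A : AddSubgroup G} {B : AddSubgroup K} (f : A →+ K ⧸ B)
    {x : G} : x ∈ A ↔ ∃ y, (x, y) ∈ graphModulo f := by
  simp only [mem_graphModulo]
  refine ⟨fun hx => ?_, fun ⟨_, hx, _⟩ => hx⟩
  obtain ⟨y, hy⟩ := QuotientAddGroup.mk_surjective (f ⟨x, hx⟩)
  exact ⟨y, hx, hy.symm⟩

theorem zero_prod_mem_graphModulo {A : AddSubgroup G} {B : AddSubgroup K} (f : A →+ K ⧸ B)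
    {y : K} : ((0 : G), y) ∈ graphModulo f ↔ y ∈ B := by
  have hf (h : (0 : G) ∈ A) : f ⟨0, h⟩ = 0 := map_zero f
  simp only [mem_graphModulo, hf, A.zero_mem, exists_const, eq_comm (a := (0 : K ⧸ B)),
    QuotientAddGroup.eq_zero_iff]

theorem graphModulo_injective :
    Function.Injective fun t : Σ p : AddSubgroup G × AddSubgroup K, p.1 →+ K ⧸ p.2 =>
      graphModulo t.2 := by
  rintro ⟨⟨A, B⟩, f⟩ ⟨⟨A', B'⟩, f'⟩ (h : graphModulo f = graphModulo f')
  obtain rfl : A = A' := by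
    ext x
    rw [mem_iff_exists_mem_graphModulo f, mem_iff_exists_mem_graphModulo f', h]
  obtain rfl : B = B' := by
    ext y
    rw [← zero_prod_mem_graphModulo f, ← zero_prod_mem_graphModulo f', h]
  congr 1
  ext ⟨x, hx⟩
  obtain ⟨y, hy⟩ := QuotientAddGroup.mk_surjective (f ⟨x, hx⟩)
  have hmem : (x, y) ∈ graphModulo f' := h ▸ mem_graphModulo.2 ⟨hx, hy.symm⟩
  obtain ⟨_, hy'⟩ := mem_graphModulo.1 hmem
  rw [← hy, hy']

theorem exists_graphModulo_eq (H : AddSubgroup (G × K)) :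
    ∃ f : H.map (AddMonoidHom.fst G K) →+ K ⧸ H.comap (AddMonoidHom.inr G K),
      graphModulo f = H := by
  have hmk {x : G} {y y' : K} (h : (x, y) ∈ H) :
      (y : K ⧸ H.comap (AddMonoidHom.inr G K)) = y' ↔ (x, y') ∈ H := by
    rw [QuotientAddGroup.eq, AddSubgroup.mem_comap, ← H.add_mem_cancel_left h]
    simp
  let π := (AddMonoidHom.fst G K).addSubgroupMap H
  have hπ : Function.Surjective π := (AddMonoidHom.fst G K).addSubgroupMap_surjective H
  let g := (QuotientAddGroup.mk' (H.comap (AddMonoidHom.inr G K))).comp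
    ((AddMonoidHom.snd G K).comp H.subtype)
  have hker : π.ker ≤ g.ker := by
    rintro ⟨⟨x, y⟩, hxy⟩ hx
    obtain rfl : x = 0 := congrArg Subtype.val hx
    exact (hmk hxy).2 H.zero_mem
  let f := π.liftOfSurjective hπ ⟨g, hker⟩
  have hf (z : H) : f (π z) = ((z : G × K).2 : K ⧸ H.comap (AddMonoidHom.inr G K)) :=
    π.liftOfRightInverse_comp_apply _ (Function.rightInverse_surjInv hπ) ⟨g, hker⟩ z
  refine ⟨f, AddSubgroup.ext fun ⟨x, y⟩ => mem_graphModulo.trans ⟨?_, fun h => ?_⟩⟩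
  · rintro ⟨⟨⟨x, y'⟩, h, rfl⟩, hy⟩
    exact (hmk h).1 ((hf ⟨_, h⟩).symm.trans hy)
  · exact ⟨⟨_, h, rfl⟩, hf ⟨_, h⟩⟩

theorem graphModulo_bijective :
    Function.Bijective fun t : Σ p : AddSubgroup G × AddSubgroup K, p.1 →+ K ⧸ p.2 =>
      graphModulo t.2 := by
  refine ⟨graphModulo_injective, fun H => ?_⟩
  obtain ⟨f, hf⟩ := exists_graphModulo_eq H
  exact ⟨⟨(_, _), f⟩, hf⟩

theorem card_addSubgroup_prod [Finite G] [Finite K] [Fintype (AddSubgroup G)]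
    [Fintype (AddSubgroup K)] :
    Nat.card (AddSubgroup (G × K)) =
      ∑ A : AddSubgroup G, ∑ B : AddSubgroup K, Nat.card (A →+ K ⧸ B) := by
  have hfin (p : AddSubgroup G × AddSubgroup K) : Finite (p.1 →+ K ⧸ p.2) :=
    Finite.of_injective _ DFunLike.coe_injective
  rw [← Nat.card_congr (Equiv.ofBijective _ graphModulo_bijective), Nat.card_sigma,
    Fintype.sum_prod_type]

end Goursat

section Cyclic

theorem card_zmod_addMonoidHom (n : ℕ) (C : Type*) [AddCommGroup C] :
    Nat.card (ZMod n →+ C) = Nat.card (nsmulAddMonoidHom (α := C) n).ker := by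
  refine Nat.card_congr ((ZMod.lift n).symm.trans
    ((zmultiplesHom C).symm.subtypeEquiv fun f => ?_))
  rw [AddMonoidHom.mem_ker, nsmulAddMonoidHom_apply, zmultiplesHom_symm_apply, ← map_nsmul,
    nsmul_one]

theorem card_addMonoidHom_of_isAddCyclic (A C : Type*) [AddGroup A] [AddCommGroup C]
    [IsAddCyclic A] [IsAddCyclic C] [Finite C] :
    Nat.card (A →+ C) = (Nat.card A).gcd (Nat.card C) := by
  rw [Nat.card_congr (zmodAddCyclicAddEquiv ‹IsAddCyclic A›).symm.addMonoidHomCongrLeftEquiv,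
    card_zmod_addMonoidHom, IsAddCyclic.card_nsmulAddMonoidHom_ker, Nat.gcd_comm]

variable {G : Type*} [AddCommGroup G] [IsAddCyclic G] [Finite G]

theorem card_ker_nsmul_of_dvd_card {d : ℕ} (hd : d ∣ Nat.card G) :
    Nat.card (nsmulAddMonoidHom (α := G) d).ker = d := by
  rw [IsAddCyclic.card_nsmulAddMonoidHom_ker, Nat.gcd_eq_right hd]

theorem ker_nsmul_card_addSubgroup (A : AddSubgroup G) :
    (nsmulAddMonoidHom (α := G) (Nat.card A)).ker = A := by
  refine (AddSubgroup.eq_of_le_of_card_ge (fun x hx => ?_) ?_).symm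
  · exact congrArg Subtype.val (card_nsmul_eq_zero' (x := (⟨x, hx⟩ : A)))
  · rw [card_ker_nsmul_of_dvd_card A.card_addSubgroup_dvd_card]

theorem sum_card_addSubgroup_of_isAddCyclic [Fintype (AddSubgroup G)] {M : Type*}
    [AddCommMonoid M] (F : ℕ → M) :
    ∑ A : AddSubgroup G, F (Nat.card A) = ∑ d ∈ (Nat.card G).divisors, F d := by
  exact Finset.sum_bij' (fun A _ => Nat.card A) (fun d _ => (nsmulAddMonoidHom (α := G) d).ker)
    (fun A _ => Nat.mem_divisors.2 ⟨A.card_addSubgroup_dvd_card, Nat.card_pos.ne'⟩)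
    (fun _ _ => Finset.mem_univ _) (fun A _ => ker_nsmul_card_addSubgroup A)
    (fun d hd => card_ker_nsmul_of_dvd_card (Nat.dvd_of_mem_divisors hd)) fun _ _ => rfl

theorem sum_index_addSubgroup_of_isAddCyclic [Fintype (AddSubgroup G)] {M : Type*}
    [AddCommMonoid M] (F : ℕ → M) :
    ∑ A : AddSubgroup G, F A.index = ∑ d ∈ (Nat.card G).divisors, F d := by
  have h (A : AddSubgroup G) : A.index = Nat.card G / Nat.card A :=
    (Nat.div_eq_of_eq_mul_left Nat.card_pos A.index_mul_card.symm).symm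
  simp only [h, sum_card_addSubgroup_of_isAddCyclic fun d => F (Nat.card G / d),
    Nat.sum_div_divisors]

theorem card_addSubgroup_prod_of_isAddCyclic (G K : Type*) [AddCommGroup G] [AddCommGroup K]
    [IsAddCyclic G] [IsAddCyclic K] [Finite G] [Finite K] :
    Nat.card (AddSubgroup (G × K)) =
      ∑ d ∈ (Nat.card G).divisors, ∑ e ∈ (Nat.card K).divisors, d.gcd e := by
  have := Fintype.ofFinite (AddSubgroup G)
  have := Fintype.ofFinite (AddSubgroup K)
  have hquot (B : AddSubgroup K) : IsAddCyclic (K ⧸ B) :=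
    isAddCyclic_of_surjective _ (QuotientAddGroup.mk'_surjective B)
  have hhom (A : AddSubgroup G) (B : AddSubgroup K) :
      Nat.card (A →+ K ⧸ B) = (Nat.card A).gcd B.index :=
    card_addMonoidHom_of_isAddCyclic A (K ⧸ B)
  simp only [card_addSubgroup_prod, hhom]
  rw [sum_card_addSubgroup_of_isAddCyclic (G := G) fun a => ∑ B : AddSubgroup K, a.gcd B.index]
  exact Finset.sum_congr rfl fun d _ => sum_index_addSubgroup_of_isAddCyclic fun e => d.gcd e

end Cyclic

section GcdSums

theorem card_divisors_filter_dvd {m g : ℕ} (hg : g ∣ m) :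
    (m.divisors.filter (g ∣ ·)).card = σ 0 (m / g) := by
  rw [sigma_zero_apply]
  obtain ⟨k, rfl⟩ := hg
  rcases Nat.eq_zero_or_pos g with rfl | hg
  · simp
  rw [Nat.mul_div_cancel_left _ hg, eq_comm]
  refine Finset.card_nbij' (g * ·) (· / g) (fun d hd => ?_) (fun d hd => ?_) (fun d _ => ?_)
    fun d hd => ?_
  · obtain ⟨hd, hk⟩ := Nat.mem_divisors.1 hd
    simp [Nat.mul_dvd_mul_left g hd, hg.ne', hk]
  · obtain ⟨hd, c, rfl⟩ := Finset.mem_filter.1 hd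
    simpa [hg, hg.ne', Nat.mul_dvd_mul_iff_left] using hd
  · exact Nat.mul_div_cancel_left d hg
  · exact Nat.mul_div_cancel' (Finset.mem_filter.1 hd).2

theorem sum_divisors_sum_divisors_sum_divisors_gcd {M : Type*} [AddCommMonoid M] (m n : ℕ)
    (f : ℕ → M) :
    ∑ d ∈ m.divisors, ∑ e ∈ n.divisors, ∑ g ∈ (d.gcd e).divisors, f g =
      ∑ g ∈ (m.gcd n).divisors, (σ 0 (m / g) * σ 0 (n / g)) • f g := by
  have hmem (p : ℕ × ℕ) (g : ℕ) :
      p ∈ m.divisors ×ˢ n.divisors ∧ g ∈ (p.1.gcd p.2).divisors ↔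
        p ∈ m.divisors.filter (g ∣ ·) ×ˢ n.divisors.filter (g ∣ ·) ∧ g ∈ (m.gcd n).divisors := by
    simp only [Finset.mem_product, Finset.mem_filter, Nat.mem_divisors, Nat.dvd_gcd_iff]
    have hgcd (h : p.1 ∣ m) (hm : m ≠ 0) : p.1.gcd p.2 ≠ 0 :=
      Nat.gcd_ne_zero_left (ne_zero_of_dvd_ne_zero hm h)
    have hgcd' (hm : m ≠ 0) : m.gcd n ≠ 0 := Nat.gcd_ne_zero_left hm
    have htrans (h : g ∣ p.1) (h' : p.1 ∣ m) : g ∣ m := h.trans h'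
    have htrans' (h : g ∣ p.2) (h' : p.2 ∣ n) : g ∣ n := h.trans h'
    tauto
  rw [← Finset.sum_product', Finset.sum_comm' hmem]
  refine Finset.sum_congr rfl fun g hg => ?_
  obtain ⟨hm, hn⟩ := Nat.dvd_gcd_iff.1 (Nat.dvd_of_mem_divisors hg)
  rw [Finset.sum_const, Finset.card_product, card_divisors_filter_dvd hm,
    card_divisors_filter_dvd hn]

theorem sum_divisorsAntidiagonal_sq_sum_divisors_gcd {M : Type*} [AddCommMonoid M]
    (F : ℕ → ℕ → ℕ → M) (k : ℕ) :
    ∑ p ∈ (k ^ 2).divisorsAntidiagonal, ∑ g ∈ (p.1.gcd p.2).divisors, F g (p.1 / g) (p.2 / g) =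
      ∑ q ∈ k.divisorsAntidiagonal, ∑ p ∈ (q.2 ^ 2).divisorsAntidiagonal, F q.1 p.1 p.2 := by
  rw [Finset.sum_sigma', Finset.sum_sigma']
  refine (Finset.sum_bij'
    (fun y _ => ⟨(y.1.1 * y.2.1, y.1.1 * y.2.2), y.1.1⟩)
    (fun x _ => ⟨(x.2, k / x.2), (x.1.1 / x.2, x.1.2 / x.2)⟩) ?_ ?_ ?_ ?_ ?_).symm
  · rintro ⟨⟨g, j⟩, ⟨a, b⟩⟩ h
    simp only [Finset.mem_sigma, Nat.mem_divisorsAntidiagonal, Nat.mem_divisors,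
      Nat.gcd_mul_left] at h ⊢
    obtain ⟨⟨rfl, hk⟩, hab, hj⟩ := h
    have ha : a ≠ 0 := left_ne_zero_of_mul (hab ▸ hj)
    exact ⟨⟨by rw [mul_pow, ← hab]; ring, pow_ne_zero 2 hk⟩, dvd_mul_right _ _,
      mul_ne_zero (left_ne_zero_of_mul hk) (Nat.gcd_ne_zero_left ha)⟩
  · rintro ⟨⟨a, b⟩, g⟩ h
    simp only [Finset.mem_sigma, Nat.mem_divisorsAntidiagonal, Nat.mem_divisors,
      Nat.dvd_gcd_iff] at h ⊢
    obtain ⟨⟨hab, hk⟩, ⟨⟨a, rfl⟩, ⟨b, rfl⟩⟩, -⟩ := h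
    have hab' : g ^ 2 * (a * b) = k ^ 2 := by rw [← hab]; ring
    obtain ⟨j, rfl⟩ := (Nat.pow_dvd_pow_iff two_ne_zero).1 ⟨a * b, hab'.symm⟩
    have hgj : g * j ≠ 0 := ne_zero_pow two_ne_zero hk
    have hg : 0 < g := Nat.pos_of_ne_zero (left_ne_zero_of_mul hgj)
    simp only [Nat.mul_div_cancel_left _ hg]
    refine ⟨⟨trivial, hgj⟩, ?_, pow_ne_zero 2 (right_ne_zero_of_mul hgj)⟩
    exact Nat.eq_of_mul_eq_mul_left (pow_pos hg 2) (hab'.trans (mul_pow g j 2))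
  · rintro ⟨⟨g, j⟩, ⟨a, b⟩⟩ h
    simp only [Finset.mem_sigma, Nat.mem_divisorsAntidiagonal] at h
    obtain ⟨⟨rfl, hk⟩, -⟩ := h
    simp [Nat.mul_div_cancel_left _ (Nat.pos_of_ne_zero (left_ne_zero_of_mul hk))]
  · rintro ⟨⟨a, b⟩, g⟩ h
    simp only [Finset.mem_sigma, Nat.mem_divisors, Nat.dvd_gcd_iff] at h
    obtain ⟨-, ⟨ha, hb⟩, -⟩ := h
    simp [Nat.mul_div_cancel' ha, Nat.mul_div_cancel' hb]
  · rintro ⟨⟨g, j⟩, ⟨a, b⟩⟩ h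
    simp only [Finset.mem_sigma, Nat.mem_divisorsAntidiagonal] at h
    obtain ⟨⟨rfl, hk⟩, -⟩ := h
    simp [Nat.mul_div_cancel_left _ (Nat.pos_of_ne_zero (left_ne_zero_of_mul hk))]

end GcdSums

section SubpolynomialGrowth

theorem natCast_add_one_le_mul_pow {t : ℝ} (ht : 1 < t) (a : ℕ) :
    (a : ℝ) + 1 ≤ max 1 (1 / (t - 1)) * t ^ a := by
  set C := max 1 (1 / (t - 1))
  have hC : 1 ≤ C := le_max_left _ _
  have hCt : 1 ≤ C * (t - 1) := (div_le_iff₀ (sub_pos.2 ht)).1 (le_max_right _ _)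
  calc (a : ℝ) + 1 ≤ a * (C * (t - 1)) + C := by
        gcongr
        exact le_mul_of_one_le_right a.cast_nonneg hCt
    _ = C * (1 + a * (t - 1)) := by ring
    _ ≤ C * t ^ a := by
        gcongr
        simpa using one_add_mul_le_pow (a := t - 1) (by linarith) a

theorem natCast_rpow_eq_prod_primeFactors {n : ℕ} (hn : n ≠ 0) (δ : ℝ) :
    (n : ℝ) ^ δ = ∏ p ∈ n.primeFactors, ((p : ℝ) ^ δ) ^ n.factorization p := by
  conv_lhs => rw [← Nat.prod_factorization_pow_eq_self hn]
  rw [Finsupp.prod, Nat.support_factorization, Nat.cast_prod,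
    ← Real.finsetProd_rpow _ _ fun _ _ => Nat.cast_nonneg _]
  refine Finset.prod_congr rfl fun p _ => ?_
  rw [Nat.cast_pow, Real.rpow_pow_comm p.cast_nonneg]

theorem exists_forall_prod_le_of_eventually_eq_one {C : ℕ → ℝ} (h : ∀ p, 1 ≤ C p)
    (h_one : ∀ᶠ p in Filter.atTop, C p = 1) : ∃ D : ℝ, ∀ s : Finset ℕ, ∏ p ∈ s, C p ≤ D := by
  obtain ⟨P, hP⟩ := Filter.eventually_atTop.1 h_one
  refine ⟨∏ p ∈ Finset.range P, C p, fun s => ?_⟩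
  calc ∏ p ∈ s, C p = ∏ p ∈ s with p < P, C p :=
        (Finset.prod_filter_of_ne fun p _ hp => lt_of_not_ge fun hPp => hp (hP p hPp)).symm
    _ ≤ ∏ p ∈ Finset.range P, C p :=
        Finset.prod_le_prod_of_subset_of_one_le
          (fun p hp => Finset.mem_range.2 (Finset.mem_filter.1 hp).2)
          (fun p _ => zero_le_one.trans (h p)) fun p _ _ => h p

/-- The growth condition `f n = n ^ o(1)`, in the form `f n = O(n ^ δ)` for every `δ > 0`. The
bounds hold for all `n` rather than for large `n`, so that they apply to all divisors of an integer;
at `n = 0` they force `f 0 = 0`. -/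
def SubpolynomialGrowth (f : ℕ → ℝ) : Prop :=
  ∀ δ : ℝ, 0 < δ → ∃ C : ℝ, ∀ n : ℕ, |f n| ≤ C * (n : ℝ) ^ δ

theorem subpolynomialGrowth_sigma_zero : SubpolynomialGrowth fun n => (σ 0 n : ℝ) := by
  intro δ hδ
  let C (p : ℕ) : ℝ := max 1 (1 / ((p : ℝ) ^ δ - 1))
  have hC_one : ∀ᶠ p : ℕ in Filter.atTop, C p = 1 := by
    filter_upwards [((tendsto_rpow_atTop hδ).comp
      tendsto_natCast_atTop_atTop).eventually_ge_atTop 2] with p (hp : 2 ≤ (p : ℝ) ^ δ)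
    exact max_eq_left ((div_le_one (by linarith)).2 (by linarith))
  obtain ⟨D, hD⟩ := exists_forall_prod_le_of_eventually_eq_one (fun p => le_max_left _ _) hC_one
  refine ⟨D, fun n => ?_⟩
  rcases eq_or_ne n 0 with rfl | hn
  · simp [Real.zero_rpow hδ.ne']
  rw [abs_of_nonneg (Nat.cast_nonneg _)]
  calc (σ 0 n : ℝ) = ∏ p ∈ n.primeFactors, ((n.factorization p : ℝ) + 1) := by
        simp [sigma_zero_apply, Nat.card_divisors hn]
    _ ≤ ∏ p ∈ n.primeFactors, C p * ((p : ℝ) ^ δ) ^ n.factorization p := by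
        gcongr with p hp
        refine natCast_add_one_le_mul_pow (Real.one_lt_rpow ?_ hδ) _
        exact_mod_cast (Nat.prime_of_mem_primeFactors hp).one_lt
    _ = (∏ p ∈ n.primeFactors, C p) * (n : ℝ) ^ δ := by
        rw [Finset.prod_mul_distrib, natCast_rpow_eq_prod_primeFactors hn]
    _ ≤ D * (n : ℝ) ^ δ := by
        gcongr
        exact hD _

namespace SubpolynomialGrowth

theorem of_abs_le {f g : ℕ → ℝ} (hg : SubpolynomialGrowth g) (h : ∀ n, |f n| ≤ |g n|) :
    SubpolynomialGrowth f := fun δ hδ =>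
  (hg δ hδ).imp fun _ hC n => (h n).trans (hC n)

theorem comp_pow {f : ℕ → ℝ} (hf : SubpolynomialGrowth f) {k : ℕ} (hk : k ≠ 0) :
    SubpolynomialGrowth fun n => f (n ^ k) := by
  intro δ hδ
  obtain ⟨C, hC⟩ := hf (δ / k) (by positivity)
  refine ⟨C, fun n => (hC (n ^ k)).trans_eq ?_⟩
  rw [Nat.cast_pow, ← Real.rpow_natCast_mul n.cast_nonneg, mul_div_cancel₀ _ (by positivity)]

theorem mul {f g : ArithmeticFunction ℝ} (hf : SubpolynomialGrowth f)
    (hg : SubpolynomialGrowth g) : SubpolynomialGrowth (f * g : ArithmeticFunction ℝ) := by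
  intro δ hδ
  obtain ⟨A, hA⟩ := hf (δ / 2) (half_pos hδ)
  obtain ⟨B, hB⟩ := hg (δ / 2) (half_pos hδ)
  obtain ⟨C, hC⟩ := subpolynomialGrowth_sigma_zero (δ / 2) (half_pos hδ)
  have hA0 : 0 ≤ A := by simpa using (abs_nonneg _).trans (hA 1)
  have hB0 : 0 ≤ B := by simpa using (abs_nonneg _).trans (hB 1)
  refine ⟨C * A * B, fun n => ?_⟩
  rcases eq_or_ne n 0 with rfl | hn
  · simp [Real.zero_rpow hδ.ne']
  have hn0 : (0 : ℝ) < n := by positivity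
  have hterm : ∀ p ∈ n.divisorsAntidiagonal, |f p.1 * g p.2| ≤ A * B * (n : ℝ) ^ (δ / 2) := by
    intro p hp
    calc |f p.1 * g p.2| ≤ (A * (p.1 : ℝ) ^ (δ / 2)) * (B * (p.2 : ℝ) ^ (δ / 2)) := by
          rw [abs_mul]; gcongr; exacts [hA _, hB _]
      _ = A * B * (n : ℝ) ^ (δ / 2) := by
          rw [← (Nat.mem_divisorsAntidiagonal.1 hp).1, Nat.cast_mul,
            Real.mul_rpow p.1.cast_nonneg p.2.cast_nonneg]
          ring
  calc |(f * g) n| ≤ ∑ p ∈ n.divisorsAntidiagonal, |f p.1 * g p.2| := by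
        rw [mul_apply]; exact Finset.abs_sum_le_sum_abs _ _
    _ ≤ n.divisorsAntidiagonal.card • (A * B * (n : ℝ) ^ (δ / 2)) :=
        Finset.sum_le_card_nsmul _ _ _ hterm
    _ = σ 0 n * (A * B * (n : ℝ) ^ (δ / 2)) := by
        rw [nsmul_eq_mul, sigma_zero_apply, ← Nat.map_div_right_divisors, Finset.card_map]
    _ ≤ C * (n : ℝ) ^ (δ / 2) * (A * B * (n : ℝ) ^ (δ / 2)) := by
        gcongr
        exact (le_abs_self _).trans (hC n)
    _ = C * A * B * (n : ℝ) ^ δ := by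
        rw [← add_halves δ, Real.rpow_add hn0, add_halves]; ring

theorem summable_abs_mul_rpow_neg {f : ℕ → ℝ} (hf : SubpolynomialGrowth f) {α : ℝ} (hα : 1 < α) :
    Summable fun n : ℕ => |f n| * (n : ℝ) ^ (-α) := by
  obtain ⟨C, hC⟩ := hf ((α - 1) / 2) (by linarith)
  have hsum : Summable fun n : ℕ => C * (n : ℝ) ^ (-((α + 1) / 2)) :=
    (Real.summable_nat_rpow.2 (by linarith)).mul_left C
  refine hsum.of_nonneg_of_le (fun n => by positivity) fun n => ?_
  calc |f n| * (n : ℝ) ^ (-α) ≤ C * (n : ℝ) ^ ((α - 1) / 2) * (n : ℝ) ^ (-α) := by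
        gcongr; exact hC n
    _ = C * (n : ℝ) ^ (-((α + 1) / 2)) := by
        rw [mul_assoc, ← Real.rpow_add' n.cast_nonneg (by linarith)]; ring_nf

end SubpolynomialGrowth

theorem subpolynomialGrowth_moebius : SubpolynomialGrowth (μ : ArithmeticFunction ℝ) := by
  refine subpolynomialGrowth_sigma_zero.of_abs_le fun n => ?_
  rcases eq_or_ne n 0 with rfl | hn
  · simp
  have hμ : |(μ n : ℝ)| ≤ 1 := by exact_mod_cast abs_moebius_le_one
  have hσ : (1 : ℝ) ≤ σ 0 n := by exact_mod_cast sigma_pos 0 n hn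
  rw [intCoe_apply]
  exact hμ.trans (hσ.trans (le_abs_self _))

end SubpolynomialGrowth

section ConvolutionWithId

variable {y α : ℝ}

theorem abs_sum_Ioc_floor_sub_le (hy : 0 ≤ y) (h₁ : 1 ≤ α) (h₂ : α ≤ 2) :
    |(∑ m ∈ Finset.Ioc 0 ⌊y⌋₊, (m : ℝ)) - y ^ 2 / 2| ≤ y ^ α / 2 := by
  have hsum (q : ℕ) : ∑ m ∈ Finset.Ioc 0 q, (m : ℝ) = q * (q + 1) / 2 := by
    induction q with
    | zero => simp
    | succ q ih => rw [Finset.sum_Ioc_succ_top q.zero_le, ih]; push_cast; ring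
  rw [hsum]
  rcases lt_or_ge y 1 with h | h
  · have hα : y ^ 2 ≤ y ^ α := by
      simpa using Real.rpow_le_rpow_of_exponent_ge' hy h.le (by linarith) h₂
    rw [Nat.floor_eq_zero.2 h, abs_le]
    constructor <;> norm_num <;> linarith [sq_nonneg y]
  · have hα : y ≤ y ^ α := Real.self_le_rpow_of_one_le h h₁
    have hq := Nat.floor_le hy
    have hq' := Nat.lt_floor_add_one y
    rw [abs_le]
    constructor <;> nlinarith

theorem hasSum_mul_sum_Ioc_floor_div (f g : ArithmeticFunction ℝ) (hy : 0 ≤ y) :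
    HasSum (fun n : ℕ => f n * ∑ m ∈ Finset.Ioc 0 ⌊y / n⌋₊, g m)
      (∑ k ∈ Finset.Ioc 0 ⌊y⌋₊, (f * g) k) := by
  rw [sum_Ioc_mul_eq_sum_sum]
  simp only [← Nat.floor_div_natCast]
  refine hasSum_sum_of_ne_finset_zero fun n hn => ?_
  rcases eq_or_ne n 0 with rfl | hn0
  · simp
  · have hlt : y / n < 1 := by
      rw [div_lt_one (by positivity), ← Nat.floor_lt hy]
      exact lt_of_not_ge fun h => hn (Finset.mem_Ioc.2 ⟨Nat.pos_of_ne_zero hn0, h⟩)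
    simp [Nat.floor_eq_zero.2 hlt]

theorem summable_div_sq_of_summable_abs_mul_rpow_neg {f : ℕ → ℝ} (h₂ : α ≤ 2)
    (hf : Summable fun n : ℕ => |f n| * (n : ℝ) ^ (-α)) :
    Summable fun n : ℕ => f n / (n : ℝ) ^ 2 := by
  refine .of_norm_bounded_eventually_nat hf ?_
  filter_upwards [Filter.eventually_ge_atTop 1] with n hn
  rw [Real.norm_eq_abs, abs_div, abs_of_nonneg (sq_nonneg (n : ℝ)), div_eq_mul_inv,
    ← Real.rpow_two, ← Real.rpow_neg n.cast_nonneg]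
  gcongr
  exact_mod_cast hn

theorem abs_sum_mul_id_sub_le {f : ArithmeticFunction ℝ} (h₁ : 1 ≤ α) (h₂ : α ≤ 2)
    (hf : Summable fun n : ℕ => |f n| * (n : ℝ) ^ (-α)) (hy : 0 ≤ y) :
    |∑ k ∈ Finset.Ioc 0 ⌊y⌋₊, (f * (ArithmeticFunction.id : ArithmeticFunction ℝ)) k -
        (∑' n : ℕ, f n / (n : ℝ) ^ 2) * (y ^ 2 / 2)| ≤
      (∑' n : ℕ, |f n| * (n : ℝ) ^ (-α)) * (y ^ α / 2) := by
  have hmain := (summable_div_sq_of_summable_abs_mul_rpow_neg h₂ hf).hasSum.mul_right (y ^ 2 / 2)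
  have hdiff := (hasSum_mul_sum_Ioc_floor_div f ArithmeticFunction.id hy).sub hmain
  rw [← hdiff.tsum_eq, ← Real.norm_eq_abs]
  refine tsum_of_norm_bounded (hf.hasSum.mul_right _) fun n => ?_
  rcases eq_or_ne n 0 with rfl | hn
  · simp
  have hn0 : (0 : ℝ) < n := by positivity
  calc ‖f n * ∑ m ∈ Finset.Ioc 0 ⌊y / n⌋₊,
          (ArithmeticFunction.id : ArithmeticFunction ℝ) m - f n / n ^ 2 * (y ^ 2 / 2)‖
      = |f n| * |(∑ m ∈ Finset.Ioc 0 ⌊y / n⌋₊, (m : ℝ)) - (y / n) ^ 2 / 2| := by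
        rw [Real.norm_eq_abs, ← abs_mul]
        simp only [natCoe_apply, id_apply]
        ring_nf
    _ ≤ |f n| * ((y / n) ^ α / 2) := by
        gcongr
        exact abs_sum_Ioc_floor_sub_le (by positivity) h₁ h₂
    _ = |f n| * (n : ℝ) ^ (-α) * (y ^ α / 2) := by
        rw [Real.div_rpow hy hn0.le, Real.rpow_neg hn0.le]; ring

end ConvolutionWithId

section SquareSums

theorem sum_filter_mul_eq_sq {M : Type*} [AddCommMonoid M] (F : ℕ → ℕ → M) (N : ℕ) :
    ∑ p ∈ (Finset.Icc 1 N ×ˢ Finset.Icc 1 N).filter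
        (fun p => p.1 * p.2 ≤ N ∧ ∃ n : ℕ, p.1 * p.2 = n ^ 2), F p.1 p.2 =
      ∑ k ∈ Finset.Ioc 0 N.sqrt, ∑ p ∈ (k ^ 2).divisorsAntidiagonal, F p.1 p.2 := by
  rw [Finset.sum_sigma', eq_comm]
  refine Finset.sum_bij' (fun y _ => y.2) (fun p _ => ⟨(p.1 * p.2).sqrt, p⟩) ?_ ?_ ?_ ?_ ?_
  · rintro ⟨k, a, b⟩ h
    simp only [Finset.mem_sigma, Finset.mem_Ioc, Nat.mem_divisorsAntidiagonal] at h
    obtain ⟨⟨-, hkN⟩, hab, hk⟩ := h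
    have habN : a * b ≤ N := hab ▸ Nat.le_sqrt'.1 hkN
    have hab0 : a * b ≠ 0 := hab ▸ hk
    have ha := Nat.pos_of_ne_zero (left_ne_zero_of_mul hab0)
    have hb := Nat.pos_of_ne_zero (right_ne_zero_of_mul hab0)
    simp only [Finset.mem_filter, Finset.mem_product, Finset.mem_Icc]
    exact ⟨⟨⟨ha, (Nat.le_mul_of_pos_right a hb).trans habN⟩,
      hb, (Nat.le_mul_of_pos_left b ha).trans habN⟩, habN, k, hab⟩
  · rintro ⟨a, b⟩ h
    simp only [Finset.mem_filter, Finset.mem_product, Finset.mem_Icc] at h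
    obtain ⟨⟨⟨ha, -⟩, hb, -⟩, habN, n, hn⟩ := h
    have hab : 0 < a * b := Nat.mul_pos ha hb
    simp only [Finset.mem_sigma, Finset.mem_Ioc, Nat.mem_divisorsAntidiagonal]
    refine ⟨⟨Nat.sqrt_pos.2 hab, Nat.sqrt_le_sqrt habN⟩, ?_⟩
    rw [hn, Nat.sqrt_eq']
    exact ⟨rfl, hn ▸ hab.ne'⟩
  · rintro ⟨k, a, b⟩ h
    simp only [Finset.mem_sigma, Nat.mem_divisorsAntidiagonal] at h
    simp only [h.2.1, Nat.sqrt_eq']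
  · exact fun _ _ => rfl
  · exact fun _ _ => rfl

theorem nat_sqrt_floor (x : ℝ) : Nat.sqrt ⌊x⌋₊ = ⌊√x⌋₊ := by
  refine eq_of_forall_le_iff fun k => ?_
  rcases eq_or_ne k 0 with rfl | hk
  · simp
  · rw [Nat.le_sqrt', Nat.le_floor_iff' (pow_ne_zero 2 hk), Nat.le_floor_iff' hk, Nat.cast_pow,
      Real.le_sqrt' (by positivity)]

/-- Euler's totient function `φ` as an arithmetic function. -/
def eulerTotient : ArithmeticFunction ℕ :=
  ⟨Nat.totient, Nat.totient_zero⟩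

theorem coe_eulerTotient_eq_moebius_mul_id :
    (eulerTotient : ArithmeticFunction ℝ) = μ * (ArithmeticFunction.id : ArithmeticFunction ℝ) := by
  have hζ : (ζ : ArithmeticFunction ℕ) * eulerTotient = ArithmeticFunction.id := by
    ext n
    rw [zeta_mul_apply]
    exact n.sum_totient
  rw [← hζ, natCoe_mul, ← mul_assoc, coe_moebius_mul_coe_zeta, one_mul]

/-- The function `r(j) = ∑_{ab = j²} τ(a) τ(b)` counting the quadruples of positive integers with
product `j²`. -/
def quadrupleCountSq : ArithmeticFunction ℕ :=
  ⟨fun j => (σ 0 * σ 0) (j ^ 2), by simp⟩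

theorem subpolynomialGrowth_quadrupleCountSq :
    SubpolynomialGrowth (quadrupleCountSq : ArithmeticFunction ℝ) := by
  have hσ : SubpolynomialGrowth (σ 0 : ArithmeticFunction ℝ) := subpolynomialGrowth_sigma_zero
  have hσσ := (hσ.mul hσ).comp_pow two_ne_zero
  rw [← natCoe_mul] at hσσ
  exact hσσ

theorem numSubgroups_eq_sum_divisors_gcd (m n : ℕ) [NeZero m] [NeZero n] :
    numSubgroups m n = ∑ g ∈ (m.gcd n).divisors, σ 0 (m / g) * σ 0 (n / g) * g.totient := by
  rw [numSubgroups, card_addSubgroup_prod_of_isAddCyclic, Nat.card_zmod, Nat.card_zmod]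
  simpa only [Nat.sum_totient, smul_eq_mul] using
    sum_divisors_sum_divisors_sum_divisors_gcd m n Nat.totient

theorem sum_numSubgroups_divisorsAntidiagonal_sq (k : ℕ) :
    ∑ p ∈ (k ^ 2).divisorsAntidiagonal, numSubgroups p.1 p.2 =
      (eulerTotient * quadrupleCountSq) k := by
  calc ∑ p ∈ (k ^ 2).divisorsAntidiagonal, numSubgroups p.1 p.2
      = ∑ p ∈ (k ^ 2).divisorsAntidiagonal, ∑ g ∈ (p.1.gcd p.2).divisors,
          σ 0 (p.1 / g) * σ 0 (p.2 / g) * g.totient := by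
        refine Finset.sum_congr rfl fun p hp => ?_
        have : NeZero p.1 := ⟨Nat.left_ne_zero_of_mem_divisorsAntidiagonal hp⟩
        have : NeZero p.2 := ⟨Nat.right_ne_zero_of_mem_divisorsAntidiagonal hp⟩
        exact numSubgroups_eq_sum_divisors_gcd p.1 p.2
    _ = ∑ q ∈ k.divisorsAntidiagonal, ∑ p ∈ (q.2 ^ 2).divisorsAntidiagonal,
          σ 0 p.1 * σ 0 p.2 * q.1.totient :=
        sum_divisorsAntidiagonal_sq_sum_divisors_gcd
          (fun g a b => σ 0 a * σ 0 b * g.totient) k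
    _ = (eulerTotient * quadrupleCountSq) k := by
        rw [mul_apply]
        refine Finset.sum_congr rfl fun q _ => ?_
        rw [← Finset.sum_mul, mul_comm, ← mul_apply]
        rfl

/-- The function `f = μ * r`, determined by `∑_{mn = k²} s(m, n) = (f * id)(k)`. -/
noncomputable def subgroupCoeff : ArithmeticFunction ℝ :=
  (μ : ArithmeticFunction ℝ) * (quadrupleCountSq : ArithmeticFunction ℝ)

theorem summable_abs_subgroupCoeff_mul_rpow_neg {α : ℝ} (hα : 1 < α) :
    Summable fun n : ℕ => |subgroupCoeff n| * (n : ℝ) ^ (-α) :=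
  (subpolynomialGrowth_moebius.mul
    subpolynomialGrowth_quadrupleCountSq).summable_abs_mul_rpow_neg hα

theorem T₂_eq_sum_subgroupCoeff_mul_id (x : ℝ) :
    (T₂ x : ℝ) = ∑ k ∈ Finset.Ioc 0 ⌊√x⌋₊,
      (subgroupCoeff * (ArithmeticFunction.id : ArithmeticFunction ℝ)) k := by
  have hconv : subgroupCoeff * (ArithmeticFunction.id : ArithmeticFunction ℝ) =
      (eulerTotient * quadrupleCountSq : ArithmeticFunction ℕ) := by
    rw [natCoe_mul, coe_eulerTotient_eq_moebius_mul_id, subgroupCoeff, mul_right_comm]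
  simp only [T₂, sum_filter_mul_eq_sq, sum_numSubgroups_divisorsAntidiagonal_sq, nat_sqrt_floor,
    hconv, natCoe_apply, Nat.cast_sum]

theorem abs_T₂_sub_le {α x : ℝ} (h₁ : 1 < α) (h₂ : α ≤ 2) (hx : 0 ≤ x) :
    |(T₂ x : ℝ) - (∑' n : ℕ, subgroupCoeff n / (n : ℝ) ^ 2) / 2 * x| ≤
      (∑' n : ℕ, |subgroupCoeff n| * (n : ℝ) ^ (-α)) / 2 * x ^ (α / 2) := by
  have h := abs_sum_mul_id_sub_le h₁.le h₂ (summable_abs_subgroupCoeff_mul_rpow_neg h₁)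
    (Real.sqrt_nonneg x)
  rw [← T₂_eq_sum_subgroupCoeff_mul_id, Real.sq_sqrt hx, Real.sqrt_eq_rpow,
    ← Real.rpow_mul hx, one_div_mul_eq_div] at h
  rwa [div_mul_eq_mul_div, div_mul_eq_mul_div, mul_div_assoc, mul_div_assoc]

end SquareSums

theorem stmt0_general : ∃ c₂ : ℝ, ∀ ε : ℝ, 0 < ε →
    (fun x : ℝ => (T₂ x : ℝ) - c₂ * x) =O[Filter.atTop]
      (fun x : ℝ => x ^ ((1 : ℝ) / 2 + ε)) := by
  refine ⟨(∑' n : ℕ, subgroupCoeff n / (n : ℝ) ^ 2) / 2, fun ε hε => ?_⟩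
  let α := min (1 + 2 * ε) 2
  have hα : 1 < α := lt_min (by linarith) one_lt_two
  have hαε : α / 2 ≤ 1 / 2 + ε := by linarith [min_le_left (1 + 2 * ε) 2]
  refine .of_bound ((∑' n : ℕ, |subgroupCoeff n| * (n : ℝ) ^ (-α)) / 2) ?_
  filter_upwards [Filter.eventually_ge_atTop 1] with x hx
  have hx0 : 0 ≤ x := zero_le_one.trans hx
  rw [Real.norm_eq_abs, Real.norm_of_nonneg (Real.rpow_nonneg hx0 _)]
  refine (abs_T₂_sub_le hα (min_le_right _ _) hx0).trans ?_
  gcongr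

theorem stmt0 : ∃ c₂ : ℝ, ∀ ε : ℝ, 0 < ε →
    (fun x : ℝ => (T₂ x : ℝ) - c₂ * x) =O[Filter.atTop]
      (fun x : ℝ => x ^ ((19 : ℝ) / 28 + ε)) := by
  obtain ⟨c₂, h⟩ := stmt0_general
  exact ⟨c₂, fun ε hε => by convert h (5 / 28 + ε) (by positivity) using 3; ring⟩
end

section
/- There exist constants a₀, a₁, a₂, a₃, a₄ such that for every ε > 0, one has ∑_{m₁m₂ ≤ x, m₁m₂ a perfect cube} s(m₁,m₂) = x^{2/3}·∑_{j=0}^{4} a_j (log x)^j + O_ε(x^{5/8+ε}) as x → ∞, where the sum is over pairs of positive integers (m₁,m₂) with m₁m₂ ≤ x and m₁m₂ a perfect cube. -/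
open scoped Classical

/-- `T₃ x = ∑_{m₁ m₂ ≤ x, m₁ m₂ a perfect cube} s(m₁, m₂)`, the sum over pairs of
positive integers `(m₁, m₂)` with `m₁ m₂ ≤ x` and `m₁ m₂` a perfect cube. -/
noncomputable def T₃ (x : ℝ) : ℕ :=
  ∑ p ∈ (Finset.Icc 1 ⌊x⌋₊ ×ˢ Finset.Icc 1 ⌊x⌋₊).filter
      (fun p => p.1 * p.2 ≤ ⌊x⌋₊ ∧ ∃ n : ℕ, p.1 * p.2 = n ^ 3),
    numSubgroups p.1 p.2

/-!
By Goursat's lemma `ℤ_m × ℤ_n` has `∑_{a ∣ m, b ∣ n} gcd(a, b)` subgroups, so the Dirichlet series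
of `N ↦ ∑_{m n = N} s(m, n)` is `ζ(s)⁴ ζ(2s - 1) / ζ(2s)`. At the cubes `N = n³` its coefficients
are multiplicative in `n`, equal to `4p + 16` at `n = p` and to `p³ + O(p²)` at `n = p²`. Hence the
series over `n` is `ζ(s - 1)⁴ ζ(2s - 3) H(s)`, where the coefficients of `H` are `O(1)` at `p`,
`O(p²)` at `p²` and `O(p^(3k/2))` up to powers of `k` at `pᵏ`. The worst case is `k = 3`, which
makes `H` absolutely convergent for `Re s > 11/6`.

The pole of order five at `s = 2` accounts for a main term `y²` times a polynomial of degree four in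
`log y` in the sum over `n ≤ y`. The error exponent relative to `y²` is `-1` for `ζ(s - 1)`. The
hyperbola method turns it into `-1/2` for `ζ(s - 1)²`, `-1/4` for `ζ(s - 1)⁴` and finally `-1/6` for
`ζ(s - 1)⁴ ζ(2s - 3)`, and convolution with the coefficients of `H` preserves the last one. Now put
`y = x^(1/3)`: the error exponent becomes `(2 - 1/6)/3 = 11/18 < 5/8`.
-/

section Subgroups

variable {G H : Type*} [AddCommGroup G] [AddCommGroup H]

/-- The subgroup of `G × H` attached to Goursat data: a subgroup `A` of `G`, a subgroup `B` of `H`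
and a homomorphism `φ : A →+ H ⧸ B`. It consists of the pairs `(a, h)` with `a ∈ A` such that `h`
represents `φ a`. -/
def goursatSubgroup (D : Σ (A : AddSubgroup G) (B : AddSubgroup H), A →+ H ⧸ B) :
    AddSubgroup (G × H) :=
  (((D.2.2.comp (AddMonoidHom.fst D.1 H)) -
    ((QuotientAddGroup.mk' D.2.1).comp (AddMonoidHom.snd D.1 H))).ker).map
      (D.1.subtype.prodMap (AddMonoidHom.id H))

theorem mem_goursatSubgroup {A : AddSubgroup G} {B : AddSubgroup H} {φ : A →+ H ⧸ B} {p : G × H} :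
    p ∈ goursatSubgroup ⟨A, B, φ⟩ ↔ ∃ hp : p.1 ∈ A, φ ⟨p.1, hp⟩ = p.2 := by
  obtain ⟨g, h⟩ := p
  simp [goursatSubgroup, AddSubgroup.mem_map, sub_eq_zero]

theorem goursatSubgroup_injective :
    Function.Injective (goursatSubgroup (G := G) (H := H)) := by
  rintro ⟨A, B, φ⟩ ⟨A', B', φ'⟩ h
  have mem_iff (p : G × H) : (∃ hp : p.1 ∈ A, φ ⟨p.1, hp⟩ = p.2) ↔
      ∃ hp : p.1 ∈ A', φ' ⟨p.1, hp⟩ = p.2 := by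
    rw [← mem_goursatSubgroup, ← mem_goursatSubgroup, h]
  obtain rfl : A = A' := by
    ext g
    constructor <;> intro hg
    · obtain ⟨y, hy⟩ := QuotientAddGroup.mk_surjective (φ ⟨g, hg⟩)
      exact ((mem_iff (g, y)).1 ⟨hg, hy.symm⟩).1
    · obtain ⟨y, hy⟩ := QuotientAddGroup.mk_surjective (φ' ⟨g, hg⟩)
      exact ((mem_iff (g, y)).2 ⟨hg, hy.symm⟩).1
  obtain rfl : B = B' := by
    ext y
    have hy := mem_iff (0, y)
    have h0 (h : (0 : G) ∈ A) : (⟨0, h⟩ : A) = 0 := rfl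
    simpa [h0, eq_comm (a := (0 : H ⧸ _)), QuotientAddGroup.eq_zero_iff] using hy
  obtain rfl : φ = φ' := by
    ext g
    obtain ⟨y, hy⟩ := QuotientAddGroup.mk_surjective (φ g)
    obtain ⟨_, hy'⟩ := (mem_iff (g, y)).1 ⟨g.2, hy.symm⟩
    exact hy.symm.trans hy'.symm
  rfl

theorem goursatSubgroup_surjective :
    Function.Surjective (goursatSubgroup (G := G) (H := H)) := by
  intro K
  let A : AddSubgroup G := K.map (AddMonoidHom.fst G H)
  let B : AddSubgroup H := K.comap (AddMonoidHom.inr G H)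
  have hπ : Function.Surjective ((AddMonoidHom.fst G H).addSubgroupMap K) :=
    AddMonoidHom.addSubgroupMap_surjective _ _
  let ψ : K →+ H ⧸ B := (QuotientAddGroup.mk' B).comp ((AddMonoidHom.snd G H).comp K.subtype)
  have hψ : ((AddMonoidHom.fst G H).addSubgroupMap K).ker ≤ ψ.ker := by
    rintro ⟨⟨g, y⟩, hK⟩ hg
    obtain rfl : g = 0 := congrArg Subtype.val hg
    exact (QuotientAddGroup.eq_zero_iff y).2 hK
  let φ : A →+ H ⧸ B := AddMonoidHom.liftOfSurjective _ hπ ⟨ψ, hψ⟩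
  have hφ (k : K) (hk : (k : G × H).1 ∈ A) : φ ⟨(k : G × H).1, hk⟩ = (k : G × H).2 :=
    AddMonoidHom.liftOfRightInverse_comp_apply _ _ _ ⟨ψ, hψ⟩ k
  refine ⟨⟨A, B, φ⟩, ?_⟩
  ext ⟨g, y⟩
  rw [mem_goursatSubgroup]
  constructor
  · rintro ⟨hg, hy⟩
    obtain ⟨⟨g', y'⟩, hK, hg'⟩ := id hg
    obtain rfl : g' = g := hg'
    have hB : -y' + y ∈ B := QuotientAddGroup.eq.1 ((hφ ⟨_, hK⟩ _).symm.trans hy)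
    simpa using K.add_mem hK hB
  · exact fun hK => ⟨⟨(g, y), hK, rfl⟩, hφ ⟨(g, y), hK⟩ _⟩

theorem card_addMonoidHom_of_isAddCyclic_s1 [Finite G] [Finite H] [IsAddCyclic G] [IsAddCyclic H] :
    Nat.card (G →+ H) = (Nat.card G).gcd (Nat.card H) := by
  have e : (G →+ H) ≃ (nsmulAddMonoidHom (Nat.card G) : H →+ H).ker :=
    (AddEquiv.addMonoidHomCongrLeftEquiv (zmodAddCyclicAddEquiv ‹IsAddCyclic G›).symm).trans
      ((ZMod.lift (Nat.card G)).symm.trans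
        ((zmultiplesHom H).symm.subtypeEquiv fun f => by
          simp [AddMonoidHom.mem_ker, ← map_nsmul]))
  rw [Nat.card_congr e, IsAddCyclic.card_nsmulAddMonoidHom_ker, Nat.gcd_comm]

variable [Finite G] [IsAddCyclic G]

theorem addSubgroup_eq_ker_nsmul_card (A : AddSubgroup G) :
    A = (nsmulAddMonoidHom (Nat.card A) : G →+ G).ker := by
  refine AddSubgroup.eq_of_le_of_card_ge (fun a ha => ?_) ?_
  · exact congrArg Subtype.val (card_nsmul_eq_zero' (x := (⟨a, ha⟩ : A)))
  · rw [IsAddCyclic.card_nsmulAddMonoidHom_ker, Nat.gcd_eq_right A.card_addSubgroup_dvd_card]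

theorem sum_addSubgroup_card [Fintype (AddSubgroup G)] {M : Type*} [AddCommMonoid M] (f : ℕ → M) :
    ∑ A : AddSubgroup G, f (Nat.card A) = ∑ d ∈ (Nat.card G).divisors, f d := by
  have hcard {d : ℕ} (hd : d ∈ (Nat.card G).divisors) :
      Nat.card (nsmulAddMonoidHom d : G →+ G).ker = d := by
    rw [IsAddCyclic.card_nsmulAddMonoidHom_ker, Nat.gcd_eq_right (Nat.dvd_of_mem_divisors hd)]
  refine Finset.sum_nbij' (fun A => Nat.card A) (fun d => (nsmulAddMonoidHom d : G →+ G).ker)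
    (fun A _ => Nat.mem_divisors.2 ⟨A.card_addSubgroup_dvd_card, Nat.card_pos.ne'⟩)
    (fun _ _ => Finset.mem_univ _) (fun A _ => (addSubgroup_eq_ker_nsmul_card A).symm)
    (fun d hd => hcard hd) (fun _ _ => rfl)

theorem sum_addSubgroup_index [Fintype (AddSubgroup G)] {M : Type*} [AddCommMonoid M]
    (f : ℕ → M) : ∑ A : AddSubgroup G, f A.index = ∑ d ∈ (Nat.card G).divisors, f d := by
  have hindex (A : AddSubgroup G) : A.index = Nat.card G / Nat.card A :=
    (Nat.div_eq_of_eq_mul_right Nat.card_pos A.card_mul_index.symm).symm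
  simp only [hindex]
  rw [sum_addSubgroup_card fun d => f (Nat.card G / d), Nat.sum_div_divisors]

theorem card_addSubgroup_prod_s1 [Finite H] [IsAddCyclic H] :
    Nat.card (AddSubgroup (G × H)) =
      ∑ a ∈ (Nat.card G).divisors, ∑ b ∈ (Nat.card H).divisors, a.gcd b := by
  have := Fintype.ofFinite (AddSubgroup G)
  have := Fintype.ofFinite (AddSubgroup H)
  have (A : AddSubgroup G) (B : AddSubgroup H) : Finite (A →+ H ⧸ B) := DFunLike.finite _
  have hhom (A : AddSubgroup G) (B : AddSubgroup H) :
      Nat.card (A →+ H ⧸ B) = (Nat.card A).gcd B.index :=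
    have : IsAddCyclic (H ⧸ B) := isAddCyclic_of_surjective _ (QuotientAddGroup.mk'_surjective B)
    card_addMonoidHom_of_isAddCyclic_s1
  calc Nat.card (AddSubgroup (G × H))
      = Nat.card (Σ (A : AddSubgroup G) (B : AddSubgroup H), A →+ H ⧸ B) :=
        (Nat.card_congr
          (Equiv.ofBijective _ ⟨goursatSubgroup_injective, goursatSubgroup_surjective⟩)).symm
    _ = ∑ A : AddSubgroup G, ∑ B : AddSubgroup H, (Nat.card A).gcd B.index := by
        simp only [Nat.card_sigma, hhom]
    _ = _ := by
        simp only [sum_addSubgroup_index]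
        exact sum_addSubgroup_card fun a => ∑ b ∈ (Nat.card H).divisors, a.gcd b

end Subgroups

theorem numSubgroups_eq_sum_gcd {m n : ℕ} (hm : m ≠ 0) (hn : n ≠ 0) :
    numSubgroups m n = ∑ a ∈ m.divisors, ∑ b ∈ n.divisors, a.gcd b := by
  have := NeZero.mk hm
  have := NeZero.mk hn
  rw [numSubgroups, card_addSubgroup_prod_s1, Nat.card_zmod, Nat.card_zmod]

section SqLift

open ArithmeticFunction

/-- The arithmetic function `sqLift g`, supported on the squares, with value `g n` at `n²`. Its
Dirichlet series is that of `g` at `2s`. -/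
def sqLift {R : Type*} [Zero R] (g : ArithmeticFunction R) : ArithmeticFunction R :=
  ⟨fun n => if IsSquare n then g n.sqrt else 0, by simp⟩

section Zero

variable {R : Type*} [Zero R] (g : ArithmeticFunction R)

theorem sqLift_mul_self (n : ℕ) : sqLift g (n * n) = g n := by
  simp [sqLift]

theorem sqLift_eq_zero {n : ℕ} (hn : ¬IsSquare n) : sqLift g n = 0 := by
  simp [sqLift, hn]

end Zero

section CommSemiring

variable {R : Type*} [CommSemiring R]

theorem isSquare_of_coprime_of_isSquare_mul {m n : ℕ} (h : m.Coprime n) (hs : IsSquare (m * n)) :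
    IsSquare m := by
  obtain ⟨r, hr⟩ := hs
  obtain ⟨d, hd⟩ := exists_associated_pow_of_mul_eq_pow (Nat.isUnit_iff.2 h) (hr.trans (sq r).symm)
  exact ⟨d, by rw [← associated_iff_eq.1 hd, sq]⟩

theorem isMultiplicative_sqLift {g : ArithmeticFunction R} (hg : g.IsMultiplicative) :
    (sqLift g).IsMultiplicative := by
  refine ⟨(sqLift_mul_self g 1).trans hg.map_one, fun {m n} h => ?_⟩
  by_cases hmn : IsSquare (m * n)
  · obtain ⟨a, rfl⟩ := isSquare_of_coprime_of_isSquare_mul h hmn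
    obtain ⟨b, rfl⟩ := isSquare_of_coprime_of_isSquare_mul h.symm (by rwa [mul_comm])
    rw [mul_mul_mul_comm, sqLift_mul_self, sqLift_mul_self, sqLift_mul_self]
    exact hg.map_mul_of_coprime h.coprime_mul_right.coprime_mul_right_right
  · rw [sqLift_eq_zero g hmn]
    by_cases hm : IsSquare m
    · rw [sqLift_eq_zero g fun hn => hmn (hm.mul hn), mul_zero]
    · rw [sqLift_eq_zero g hm, zero_mul]

theorem sqLift_mul_apply (g f : ArithmeticFunction R) (n : ℕ) :
    (sqLift g * f) n = ∑ d ∈ n.divisors with d * d ∣ n, g d * f (n / (d * d)) := by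
  rw [mul_apply, Nat.sum_divisorsAntidiagonal fun a b => sqLift g a * f b]
  symm
  refine Finset.sum_of_injOn (fun d => d * d) (fun _ _ _ _ h => Nat.mul_self_inj.1 h)
    (fun d hd => ?_) (fun a ha hna => ?_) fun d _ => by rw [sqLift_mul_self]
  · simp only [Finset.coe_filter, Nat.mem_divisors, Set.mem_ofPred_eq] at hd
    exact Nat.mem_divisors.2 ⟨hd.2, hd.1.2⟩
  · rw [sqLift_eq_zero, zero_mul]
    rintro ⟨d, rfl⟩
    have hd := Nat.mem_divisors.1 ha
    exact hna ⟨d, by simpa [hd] using dvd_of_mul_right_dvd hd.1, rfl⟩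

theorem sqLift_mul (g h : ArithmeticFunction R) : sqLift (g * h) = sqLift g * sqLift h := by
  ext n
  rw [sqLift_mul_apply]
  by_cases hn : IsSquare n
  · obtain ⟨r, rfl⟩ := hn
    rw [sqLift_mul_self, mul_apply, Nat.sum_divisorsAntidiagonal fun a b => g a * h b]
    have hsq {d : ℕ} : d * d ∣ r * r ↔ d ∣ r := by
      simpa only [sq] using Nat.pow_dvd_pow_iff (a := d) (b := r) two_ne_zero
    have hset : {d ∈ (r * r).divisors | d * d ∣ r * r} = r.divisors := by
      ext d
      simp only [Finset.mem_filter, Nat.mem_divisors, hsq, mul_self_ne_zero]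
      exact ⟨fun h => ⟨h.2, h.1.2⟩, fun h => ⟨⟨h.1.mul_right r, h.2⟩, h.1⟩⟩
    rw [hset]
    refine Finset.sum_congr rfl fun d hd => ?_
    have hdr := Nat.dvd_of_mem_divisors hd
    rw [← Nat.div_mul_div_comm hdr hdr, sqLift_mul_self]
  · rw [sqLift_eq_zero _ hn, Finset.sum_eq_zero]
    intro d hd
    obtain ⟨c, rfl⟩ := (Finset.mem_filter.1 hd).2
    have hdd : 0 < d * d := Nat.pos_of_ne_zero fun h => by simp [h] at hn
    rw [Nat.mul_div_cancel_left _ hdd, sqLift_eq_zero _ fun hc => hn ((IsSquare.mul_self d).mul hc),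
      mul_zero]

theorem sqLift_one : sqLift (1 : ArithmeticFunction R) = 1 := by
  ext n
  by_cases hn : IsSquare n
  · obtain ⟨r, rfl⟩ := hn
    simp [sqLift_mul_self, one_apply]
  · rw [sqLift_eq_zero _ hn, one_apply_ne (by rintro rfl; exact hn IsSquare.one)]

theorem sum_divisors_gcd_eq_sqLift_mul (f g h : ArithmeticFunction R) (n : ℕ) :
    ∑ p ∈ n.divisorsAntidiagonal, ∑ d ∈ (p.1.gcd p.2).divisors, f d * (g (p.1 / d) * h (p.2 / d)) =
      (sqLift f * (g * h)) n := by
  rw [sqLift_mul_apply]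
  simp only [mul_apply, Finset.mul_sum]
  rw [Finset.sum_sigma', Finset.sum_sigma']
  refine Finset.sum_nbij' (fun x => ⟨x.2, (x.1.1 / x.2, x.1.2 / x.2)⟩)
    (fun y => ⟨(y.1 * y.2.1, y.1 * y.2.2), y.1⟩) ?_ ?_ ?_ ?_ fun _ _ => rfl
  · rintro ⟨⟨a, b⟩, d⟩ hx
    simp only [Finset.mem_sigma, Nat.mem_divisorsAntidiagonal, Nat.mem_divisors, Nat.dvd_gcd_iff,
      Finset.mem_filter] at hx ⊢
    obtain ⟨⟨rfl, hn⟩, ⟨hda, hdb⟩, -⟩ := hx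
    refine ⟨⟨⟨hda.mul_right b, hn⟩, mul_dvd_mul hda hdb⟩, Nat.div_mul_div_comm hda hdb, ?_⟩
    have hd : d ≠ 0 := ne_zero_of_dvd_ne_zero (left_ne_zero_of_mul hn) hda
    exact (Nat.div_ne_zero_iff_of_dvd (mul_dvd_mul hda hdb)).2 ⟨hn, mul_self_ne_zero.2 hd⟩
  · rintro ⟨d, a, b⟩ hy
    simp only [Finset.mem_sigma, Nat.mem_divisorsAntidiagonal, Nat.mem_divisors, Nat.dvd_gcd_iff,
      Finset.mem_filter] at hy ⊢
    obtain ⟨⟨⟨-, hn⟩, c, rfl⟩, hab, -⟩ := hy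
    have hd : 0 < d * d := Nat.pos_of_ne_zero (left_ne_zero_of_mul hn)
    rw [Nat.mul_div_cancel_left _ hd] at hab
    have hprod : d * a * (d * b) = d * d * c := by rw [mul_mul_mul_comm, hab]
    refine ⟨⟨hprod, hn⟩, ⟨dvd_mul_right d a, dvd_mul_right d b⟩, fun hg => hn ?_⟩
    rw [← hprod, (Nat.gcd_eq_zero_iff.1 hg).1, zero_mul]
  · rintro ⟨⟨a, b⟩, d⟩ hx
    simp only [Finset.mem_sigma, Nat.mem_divisors, Nat.dvd_gcd_iff] at hx
    simp [Nat.mul_div_cancel' hx.2.1.1, Nat.mul_div_cancel' hx.2.1.2]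
  · rintro ⟨d, a, b⟩ hy
    have hd : 0 < d := Nat.pos_of_mem_divisors (Finset.mem_filter.1 (Finset.mem_sigma.1 hy).1).1
    simp [Nat.mul_div_cancel_left _ hd]

end CommSemiring
end SqLift

section SubgroupSum

open ArithmeticFunction
open scoped ArithmeticFunction.zeta ArithmeticFunction.sigma

theorem card_filter_dvd_divisors {n d : ℕ} (hn : n ≠ 0) (hd : d ∣ n) :
    (n.divisors.filter (d ∣ ·)).card = σ 0 (n / d) := by
  rw [sigma_zero_apply]
  obtain ⟨k, rfl⟩ := hd
  have hd0 : 0 < d := Nat.pos_of_ne_zero (left_ne_zero_of_mul hn)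
  rw [Nat.mul_div_cancel_left _ hd0]
  refine (Finset.card_nbij (d * ·) (fun a ha => ?_) (mul_right_injective₀ hd0.ne').injOn ?_).symm
  · simp_all [Nat.mul_dvd_mul_left]
  · intro a ha
    simp only [Finset.coe_filter, Nat.mem_divisors, Set.mem_ofPred_eq] at ha
    obtain ⟨⟨ha, -⟩, b, rfl⟩ := ha
    exact ⟨b, by simpa [right_ne_zero_of_mul hn] using Nat.dvd_of_mul_dvd_mul_left hd0 ha, rfl⟩

theorem sum_divisors_gcd_eq_sum_totient {m n : ℕ} (hm : m ≠ 0) (hn : n ≠ 0) :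
    ∑ a ∈ m.divisors, ∑ b ∈ n.divisors, a.gcd b =
      ∑ d ∈ (m.gcd n).divisors, d.totient * (σ 0 (m / d) * σ 0 (n / d)) := by
  have hgcd {a b : ℕ} (ha : a ∈ m.divisors) (hb : b ∈ n.divisors) :
      a.gcd b = ∑ d ∈ (m.gcd n).divisors,
        d.totient * ((if d ∣ a then 1 else 0) * (if d ∣ b then 1 else 0)) := by
    rw [Nat.mem_divisors] at ha hb
    have hset : (a.gcd b).divisors = {d ∈ (m.gcd n).divisors | d ∣ a ∧ d ∣ b} := by
      ext d
      simp only [Nat.mem_divisors, Finset.mem_filter, Nat.dvd_gcd_iff]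
      have := Nat.gcd_ne_zero_left (n := b) (ne_zero_of_dvd_ne_zero hm ha.1)
      have := Nat.gcd_ne_zero_left (n := n) hm
      grind [dvd_trans]
    rw [← Nat.sum_totient (a.gcd b), hset, Finset.sum_filter]
    exact Finset.sum_congr rfl fun d _ => by split_ifs <;> simp_all
  calc ∑ a ∈ m.divisors, ∑ b ∈ n.divisors, a.gcd b
      = ∑ a ∈ m.divisors, ∑ b ∈ n.divisors, ∑ d ∈ (m.gcd n).divisors,
          d.totient * ((if d ∣ a then 1 else 0) * (if d ∣ b then 1 else 0)) :=
        Finset.sum_congr rfl fun a ha => Finset.sum_congr rfl fun b hb => hgcd ha hb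
    _ = ∑ d ∈ (m.gcd n).divisors, d.totient *
          ((∑ a ∈ m.divisors, if d ∣ a then 1 else 0) *
            ∑ b ∈ n.divisors, if d ∣ b then 1 else 0) := by
        simp_rw [Finset.sum_mul_sum, Finset.mul_sum]
        rw [Finset.sum_congr rfl fun a _ => Finset.sum_comm, Finset.sum_comm]
    _ = _ := by
        refine Finset.sum_congr rfl fun d hd => ?_
        have hd := Nat.dvd_gcd_iff.1 (Nat.dvd_of_mem_divisors hd)
        rw [← Finset.card_filter, ← Finset.card_filter, card_filter_dvd_divisors hm hd.1,
          card_filter_dvd_divisors hn hd.2]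

/-- Euler's totient as an arithmetic function. -/
def totientFun : ArithmeticFunction ℕ := ⟨Nat.totient, Nat.totient_zero⟩

@[simp]
theorem totientFun_apply (n : ℕ) : totientFun n = n.totient := rfl

theorem isMultiplicative_totientFun : totientFun.IsMultiplicative :=
  ⟨Nat.totient_one, Nat.totient_mul⟩

/-- The arithmetic function `N ↦ ∑_{m n = N} s(m, n)`, given by its factorisation
`ζ(s)⁴ ζ(2s - 1) / ζ(2s)` on the level of Dirichlet series. -/
def subgroupSum : ArithmeticFunction ℕ := sqLift totientFun * ζ ^ 4

theorem sum_numSubgroups_divisorsAntidiagonal (N : ℕ) :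
    ∑ p ∈ N.divisorsAntidiagonal, numSubgroups p.1 p.2 = subgroupSum N := by
  have hζ : (ζ : ArithmeticFunction ℕ) ^ 4 = σ 0 * σ 0 := by
    rw [← zeta_mul_pow_eq_sigma, pow_zero_eq_zeta]
    ring
  rw [subgroupSum, hζ, ← sum_divisors_gcd_eq_sqLift_mul]
  refine Finset.sum_congr rfl fun p hp => ?_
  obtain ⟨rfl, hN⟩ := Nat.mem_divisorsAntidiagonal.1 hp
  have hm := left_ne_zero_of_mul hN
  have hn := right_ne_zero_of_mul hN
  rw [numSubgroups_eq_sum_gcd hm hn, sum_divisors_gcd_eq_sum_totient hm hn]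
  rfl

/-- The arithmetic function `n ↦ f (n³)`. -/
def atCubes {R : Type*} [Zero R] (f : ArithmeticFunction R) : ArithmeticFunction R :=
  ⟨fun n => f (n ^ 3), by simp⟩

@[simp]
theorem atCubes_apply {R : Type*} [Zero R] (f : ArithmeticFunction R) (n : ℕ) :
    atCubes f n = f (n ^ 3) := rfl

theorem isMultiplicative_atCubes {R : Type*} [MonoidWithZero R] {f : ArithmeticFunction R}
    (hf : f.IsMultiplicative) : (atCubes f).IsMultiplicative := by
  refine ⟨by simp [hf.map_one], fun {m n} h => ?_⟩
  simp only [atCubes_apply, mul_pow]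
  exact hf.map_mul_of_coprime (h.pow 3 3)

/-- The sum of `c n` over the natural numbers `n ≤ y`. -/
noncomputable def summatory {R : Type*} [AddCommMonoid R] (c : ℕ → R) (y : ℝ) : R :=
  ∑ n ∈ Finset.Icc 0 ⌊y⌋₊, c n

theorem T₃_eq_summatory {x : ℝ} (hx : 0 ≤ x) :
    T₃ x = summatory (atCubes subgroupSum) (x ^ (1 / 3 : ℝ)) := by
  have hle (n : ℕ) : n ≤ ⌊x ^ (1 / 3 : ℝ)⌋₊ ↔ n ^ 3 ≤ ⌊x⌋₊ := by
    rw [Nat.le_floor_iff (by positivity), Nat.le_floor_iff hx, one_div,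
      Real.le_rpow_inv_iff_of_pos n.cast_nonneg hx three_pos]
    norm_cast
  have hset : (Finset.Icc 1 ⌊x⌋₊ ×ˢ Finset.Icc 1 ⌊x⌋₊).filter
      (fun p => p.1 * p.2 ≤ ⌊x⌋₊ ∧ ∃ n : ℕ, p.1 * p.2 = n ^ 3) =
      (Finset.Icc 0 ⌊x ^ (1 / 3 : ℝ)⌋₊).biUnion fun n => (n ^ 3).divisorsAntidiagonal := by
    ext ⟨a, b⟩
    simp only [Finset.mem_filter, Finset.mem_product, Finset.mem_Icc, Finset.mem_biUnion,
      Nat.mem_divisorsAntidiagonal, hle, zero_le, true_and]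
    constructor
    · rintro ⟨⟨⟨ha, -⟩, hb, -⟩, h, n, hn⟩
      exact ⟨n, hn ▸ h, hn, hn ▸ (Nat.mul_pos ha hb).ne'⟩
    · rintro ⟨n, hn, hab, h0⟩
      rw [← hab] at hn h0
      have ha := Nat.pos_of_ne_zero (left_ne_zero_of_mul h0)
      have hb := Nat.pos_of_ne_zero (right_ne_zero_of_mul h0)
      exact ⟨⟨⟨ha, (Nat.le_mul_of_pos_right a hb).trans hn⟩,
        hb, (Nat.le_mul_of_pos_left b ha).trans hn⟩, hn, n, hab⟩
  rw [T₃, hset, Finset.sum_biUnion]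
  · simp only [sum_numSubgroups_divisorsAntidiagonal]
    rfl
  · intro m _ n _ hmn
    refine Finset.disjoint_left.2 fun p hm hn => hmn ?_
    rw [Nat.mem_divisorsAntidiagonal] at hm hn
    exact Nat.pow_left_injective three_ne_zero (hm.1.symm.trans hn.1)

end SubgroupSum

section Summability

theorem summable_of_multiplicative {f : ℕ → ℝ} (hf : ∀ n, 0 ≤ f n) (hf₁ : f 1 = 1)
    (hmul : ∀ {m n : ℕ}, m.Coprime n → f (m * n) = f m * f n)
    (hsum : Summable fun q : Nat.Primes × ℕ => f ((q.1 : ℕ) ^ (q.2 + 1))) : Summable f := by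
  have hprime {p : ℕ} (hp : p.Prime) : Summable fun k => f (p ^ k) :=
    (summable_nat_add_iff 1).1 (hsum.prod_factor ⟨p, hp⟩)
  set P : Nat.Primes → ℝ := fun p => ∑' k, f ((p : ℕ) ^ (k + 1))
  have hP : Summable P := hsum.prod
  have hP₀ (p : Nat.Primes) : 0 ≤ P p := tsum_nonneg fun k => hf _
  have hfactor (p : Nat.Primes) : ∑' k, f ((p : ℕ) ^ k) ≤ Real.exp (P p) := by
    rw [(hprime p.2).tsum_eq_zero_add, pow_zero, hf₁, add_comm]
    exact Real.add_one_le_exp _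
  have hprod (N : ℕ) : ∏ p ∈ N.primesBelow, ∑' k, f (p ^ k) ≤ Real.exp (∑' p, P p) := by
    let s : Finset Nat.Primes := (Finset.range N).subtype Nat.Prime
    have hs : N.primesBelow = s.map (.subtype _) := by
      ext p
      simp [s, Nat.mem_primesBelow]
    rw [hs, Finset.prod_map]
    calc ∏ p ∈ s, ∑' k, f ((p : ℕ) ^ k)
        ≤ ∏ p ∈ s, Real.exp (P p) :=
          Finset.prod_le_prod (fun p _ => tsum_nonneg fun k => hf _) fun p _ => hfactor p
      _ = Real.exp (∑ p ∈ s, P p) := (Real.exp_sum _ _).symm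
      _ ≤ _ := Real.exp_le_exp.2 (sum_le_hasSum _ (fun p _ => hP₀ p) hP.hasSum)
  refine (summable_nat_add_iff 1).1
    (summable_of_sum_range_le (c := Real.exp (∑' p, P p)) (fun n => hf _) fun N => ?_)
  have hsmooth := hasSum_subtype_iff_indicator.1
    (EulerProduct.summable_and_hasSum_smoothNumbers_prod_primesBelow_tsum hf₁ hmul
      (fun hp => (hprime hp).norm) (N + 1)).2
  calc ∑ n ∈ Finset.range N, f (n + 1)
      = ∑ n ∈ Finset.Ico 1 (N + 1), (N + 1).smoothNumbers.indicator f n := by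
        rw [Finset.range_eq_Ico, Finset.sum_Ico_add' f 0 N 1, zero_add]
        refine Finset.sum_congr rfl fun n hn => (Set.indicator_of_mem ?_ f).symm
        rw [Finset.mem_Ico] at hn
        exact Nat.mem_smoothNumbers_of_lt hn.1 hn.2
    _ ≤ ∏ p ∈ (N + 1).primesBelow, ∑' k, f (p ^ k) :=
        sum_le_hasSum _ (fun n _ => Set.indicator_nonneg (fun m _ => hf m) n) hsmooth
    _ ≤ _ := hprod (N + 1)

theorem summable_add_pow_mul_geometric (D a : ℕ) {r : ℝ} (hr : ‖r‖ < 1) :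
    Summable fun k : ℕ => ((k : ℝ) + a) ^ D * r ^ k := by
  obtain rfl | hr₀ := eq_or_ne r 0
  · exact summable_of_ne_finset_zero (s := {0}) fun k hk => by
      rw [zero_pow (by simpa using hk), mul_zero]
  · have hgeom : Summable fun k : ℕ => ((k + a : ℕ) : ℝ) ^ D * r ^ (k + a) :=
      (summable_nat_add_iff (f := fun k : ℕ => (k : ℝ) ^ D * r ^ k) a).2
        (summable_pow_mul_geometric_of_norm_lt_one D hr)
    refine (hgeom.mul_right (r ^ a)⁻¹).congr fun k => ?_
    rw [Nat.cast_add, pow_add]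
    field_simp

end Summability

section PrimePowers

open ArithmeticFunction

theorem mul_apply_prime_pow {R : Type*} [Semiring R] (f g : ArithmeticFunction R) {p : ℕ}
    (hp : p.Prime) (k : ℕ) :
    (f * g) (p ^ k) = ∑ i ∈ Finset.range (k + 1), f (p ^ i) * g (p ^ (k - i)) := by
  rw [mul_apply, Nat.sum_divisorsAntidiagonal fun a b => f a * g b, Nat.sum_divisors_prime_pow hp]
  refine Finset.sum_congr rfl fun i hi => ?_
  rw [Nat.pow_div (Finset.mem_range_succ_iff.1 hi) hp.pos]

theorem isSquare_prime_pow_iff {p : ℕ} (hp : p.Prime) {k : ℕ} : IsSquare (p ^ k) ↔ Even k := by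
  refine ⟨fun ⟨r, hr⟩ => ?_, fun h => h.isSquare_pow p⟩
  have hr₀ : r ≠ 0 := by
    rintro rfl
    exact pow_ne_zero k hp.ne_zero hr
  refine ⟨r.factorization p, ?_⟩
  simpa [hp.factorization_pow, Nat.factorization_mul hr₀ hr₀] using
    congrArg (fun n => n.factorization p) hr

theorem sqLift_mul_apply_prime_pow {R : Type*} [CommSemiring R] (g f : ArithmeticFunction R)
    {p : ℕ} (hp : p.Prime) (k : ℕ) :
    (sqLift g * f) (p ^ k) = ∑ j ∈ Finset.range (k / 2 + 1), g (p ^ j) * f (p ^ (k - 2 * j)) := by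
  have hdvd (j : ℕ) : p ^ j * p ^ j ∣ p ^ k ↔ 2 * j ≤ k := by
    rw [← pow_add, ← two_mul, Nat.pow_dvd_pow_iff_le_right hp.one_lt]
  have hset : {j ∈ Finset.range (k + 1) | 2 * j ≤ k} = Finset.range (k / 2 + 1) := by
    ext j
    simp only [Finset.mem_filter, Finset.mem_range]
    lia
  rw [sqLift_mul_apply, Finset.sum_filter, Nat.sum_divisors_prime_pow hp, ← hset, Finset.sum_filter]
  refine Finset.sum_congr rfl fun j _ => ?_
  simp only [hdvd]
  split_ifs with hj
  · rw [← pow_add, ← two_mul, Nat.pow_div hj hp.pos]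
  · rfl

/-- A polynomially damped growth condition at prime powers: `f (p ^ k)` is at most `p ^ (α * k)`,
up to a factor that is polynomial in `k` and uniform in `p`. -/
def HasPrimePowerGrowth (α : ℝ) (f : ArithmeticFunction ℝ) : Prop :=
  ∃ (C : ℝ) (D : ℕ), ∀ p : ℕ, p.Prime → ∀ k : ℕ,
    |f (p ^ k)| ≤ C * ((k : ℝ) + 1) ^ D * ((p : ℝ) ^ α) ^ k

namespace HasPrimePowerGrowth

variable {α β : ℝ} {f g : ArithmeticFunction ℝ}

theorem of_abs_le_rpow (h : ∀ n : ℕ, |f n| ≤ (n : ℝ) ^ α) : HasPrimePowerGrowth α f := by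
  refine ⟨1, 0, fun p _ k => (h _).trans_eq ?_⟩
  rw [pow_zero, one_mul, one_mul, Nat.cast_pow, ← Real.rpow_natCast_mul p.cast_nonneg,
    mul_comm, Real.rpow_mul_natCast p.cast_nonneg]

theorem mono (hf : HasPrimePowerGrowth α f) (h : α ≤ β) : HasPrimePowerGrowth β f := by
  obtain ⟨C, D, hf⟩ := hf
  refine ⟨|C|, D, fun p hp k => (hf p hp k).trans ?_⟩
  have hp₁ : (1 : ℝ) ≤ p := mod_cast hp.one_lt.le
  gcongr
  exact le_abs_self C

theorem mul (hf : HasPrimePowerGrowth α f) (hg : HasPrimePowerGrowth α g) :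
    HasPrimePowerGrowth α (f * g) := by
  obtain ⟨C, D, hf⟩ := hf
  obtain ⟨C', D', hg⟩ := hg
  refine ⟨|C| * |C'|, D + D' + 1, fun p hp k => ?_⟩
  have hterm {i : ℕ} (hi : i ≤ k) : |f (p ^ i) * g (p ^ (k - i))| ≤
      |C| * |C'| * ((k : ℝ) + 1) ^ (D + D') * ((p : ℝ) ^ α) ^ k := by
    calc |f (p ^ i) * g (p ^ (k - i))|
        ≤ (|C| * ((i : ℝ) + 1) ^ D * ((p : ℝ) ^ α) ^ i) *
            (|C'| * (((k - i : ℕ) : ℝ) + 1) ^ D' * ((p : ℝ) ^ α) ^ (k - i)) := by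
          rw [abs_mul]
          refine mul_le_mul ((hf p hp i).trans ?_) ((hg p hp (k - i)).trans ?_) (abs_nonneg _)
            (by positivity)
          · gcongr
            exact le_abs_self C
          · gcongr
            exact le_abs_self C'
      _ ≤ (|C| * ((k : ℝ) + 1) ^ D * ((p : ℝ) ^ α) ^ i) *
            (|C'| * ((k : ℝ) + 1) ^ D' * ((p : ℝ) ^ α) ^ (k - i)) := by
          gcongr
          exact k.sub_le i
      _ = |C| * |C'| * ((k : ℝ) + 1) ^ (D + D') *
            (((p : ℝ) ^ α) ^ i * ((p : ℝ) ^ α) ^ (k - i)) := by ring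
      _ = _ := by rw [← pow_add, Nat.add_sub_cancel' hi]
  rw [mul_apply_prime_pow f g hp]
  calc |∑ i ∈ Finset.range (k + 1), f (p ^ i) * g (p ^ (k - i))|
      ≤ ∑ i ∈ Finset.range (k + 1), |f (p ^ i) * g (p ^ (k - i))| := Finset.abs_sum_le_sum_abs _ _
    _ ≤ (k + 1 : ℕ) • (|C| * |C'| * ((k : ℝ) + 1) ^ (D + D') * ((p : ℝ) ^ α) ^ k) := by
        simpa using Finset.sum_le_card_nsmul (Finset.range (k + 1)) _ _
          fun i hi => hterm (Finset.mem_range_succ_iff.1 hi)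
    _ = _ := by
        rw [nsmul_eq_mul]
        push_cast
        ring

theorem pow (hα : 0 ≤ α) (hf : HasPrimePowerGrowth α f) (d : ℕ) :
    HasPrimePowerGrowth α (f ^ d) := by
  induction d with
  | zero =>
    refine (of_abs_le_rpow fun n => ?_).mono hα
    rw [pow_zero, one_apply, Real.rpow_zero]
    split_ifs <;> simp
  | succ d ih => simpa only [pow_succ] using ih.mul hf

protected theorem sqLift (hf : HasPrimePowerGrowth α f) :
    HasPrimePowerGrowth (α / 2) (sqLift f) := by
  obtain ⟨C, D, hf⟩ := hf
  refine ⟨|C|, D, fun p hp k => ?_⟩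
  by_cases hk : Even k
  · obtain ⟨j, rfl⟩ := hk
    have hrpow : ((p : ℝ) ^ (α / 2)) ^ (j + j) = ((p : ℝ) ^ α) ^ j := by
      rw [← two_mul, pow_mul, ← Real.rpow_mul_natCast p.cast_nonneg, Nat.cast_two,
        div_mul_cancel₀ α two_ne_zero]
    rw [pow_add, sqLift_mul_self, hrpow]
    refine (hf p hp j).trans ?_
    gcongr
    · exact le_abs_self C
    · exact Nat.le_add_right j j
  · rw [sqLift_eq_zero f (mt (isSquare_prime_pow_iff hp).1 hk), abs_zero]
    positivity

protected theorem atCubes (hf : HasPrimePowerGrowth α f) :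
    HasPrimePowerGrowth (3 * α) (atCubes f) := by
  obtain ⟨C, D, hf⟩ := hf
  refine ⟨|C| * 3 ^ D, D, fun p hp k => ?_⟩
  have hrpow : ((p : ℝ) ^ (3 * α)) ^ k = ((p : ℝ) ^ α) ^ (k * 3) := by
    rw [mul_comm 3 α, Real.rpow_mul p.cast_nonneg, mul_comm k, pow_mul]
    norm_cast
  rw [atCubes_apply, ← pow_mul, hrpow, mul_assoc |C|, ← mul_pow]
  refine (hf p hp (k * 3)).trans ?_
  gcongr
  · exact le_abs_self C
  · push_cast
    linarith

theorem abs_mul_rpow_neg_le {C α s : ℝ} {D : ℕ} (hf : ∀ p : ℕ, p.Prime → ∀ k : ℕ,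
    |f (p ^ k)| ≤ C * ((k : ℝ) + 1) ^ D * ((p : ℝ) ^ α) ^ k) (hs : α ≤ s) {p : ℕ} (hp : p.Prime)
    (k : ℕ) : |f (p ^ (k + 3))| * ((p : ℝ) ^ (-s)) ^ (k + 3) ≤
      (p : ℝ) ^ (3 * (α - s)) * (|C| * (((k : ℝ) + 4) ^ D * ((2 : ℝ) ^ (α - s)) ^ k)) := by
  have hp₂ : (2 : ℝ) ≤ p := mod_cast hp.two_le
  have hp₀ : (0 : ℝ) < p := by linarith
  calc |f (p ^ (k + 3))| * ((p : ℝ) ^ (-s)) ^ (k + 3)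
      ≤ |C| * (((k + 3 : ℕ) : ℝ) + 1) ^ D * ((p : ℝ) ^ α) ^ (k + 3) *
          ((p : ℝ) ^ (-s)) ^ (k + 3) := by
        gcongr
        refine (hf p hp (k + 3)).trans ?_
        gcongr
        exact le_abs_self C
    _ = ((p : ℝ) ^ (α - s)) ^ 3 * (|C| * (((k : ℝ) + 4) ^ D * ((p : ℝ) ^ (α - s)) ^ k)) := by
        rw [mul_assoc, ← mul_pow, ← Real.rpow_add hp₀, ← sub_eq_add_neg]
        push_cast
        ring
    _ ≤ (p : ℝ) ^ (3 * (α - s)) * (|C| * (((k : ℝ) + 4) ^ D * ((2 : ℝ) ^ (α - s)) ^ k)) := by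
        rw [← Real.rpow_mul_natCast hp₀.le, mul_comm (α - s), Nat.cast_ofNat]
        gcongr _ * (_ * (_ * ?_ ^ k))
        exact Real.rpow_le_rpow_of_nonpos two_pos hp₂ (by linarith)

theorem exists_summable_bound (hf : HasPrimePowerGrowth α f) {β₁ β₂ C₁ C₂ s : ℝ}
    (h₁ : ∀ p : ℕ, p.Prime → |f p| ≤ C₁ * (p : ℝ) ^ β₁)
    (h₂ : ∀ p : ℕ, p.Prime → |f (p ^ 2)| ≤ C₂ * (p : ℝ) ^ β₂)
    (hs₁ : β₁ + 1 < s) (hs₂ : β₂ + 1 < 2 * s) (hs₃ : 3 * α + 1 < 3 * s) :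
    ∃ δ > (1 : ℝ), ∃ W : ℕ → ℝ, Summable W ∧ ∀ p : ℕ, p.Prime → ∀ k,
      |f (p ^ (k + 1))| * ((p : ℝ) ^ (-s)) ^ (k + 1) ≤ (p : ℝ) ^ (-δ) * W k := by
  obtain ⟨C, D, hf⟩ := hf
  obtain ⟨δ, hδ, hδ₁, hδ₂, hδ₃⟩ :
      ∃ δ : ℝ, 1 < δ ∧ δ ≤ s - β₁ ∧ δ ≤ 2 * s - β₂ ∧ δ ≤ 3 * (s - α) :=
    ⟨min (s - β₁) (min (2 * s - β₂) (3 * (s - α))), by simp only [lt_min_iff]; grind, by simp⟩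
  have hC₁ : 0 ≤ C₁ := nonneg_of_mul_nonneg_left ((abs_nonneg _).trans (h₁ 2 Nat.prime_two))
    (by positivity)
  have hC₂ : 0 ≤ C₂ := nonneg_of_mul_nonneg_left ((abs_nonneg _).trans (h₂ 2 Nat.prime_two))
    (by positivity)
  have hr : ‖(2 : ℝ) ^ (α - s)‖ < 1 := by
    rw [Real.norm_of_nonneg (by positivity)]
    exact Real.rpow_lt_one_of_one_lt_of_neg one_lt_two (by linarith)
  let W : ℕ → ℝ
    | 0 => C₁
    | 1 => C₂
    | k + 2 => |C| * (((k : ℝ) + 4) ^ D * ((2 : ℝ) ^ (α - s)) ^ k)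
  have hW : Summable W := by
    rw [← summable_nat_add_iff 2]
    exact (summable_add_pow_mul_geometric D 4 hr).mul_left |C|
  refine ⟨δ, hδ, W, hW, fun p hp k => ?_⟩
  have hp₁ : (1 : ℝ) ≤ p := mod_cast hp.one_lt.le
  have hp₀ : (0 : ℝ) < p := by linarith
  have hsmall {m : ℕ} {β B : ℝ} (hB : 0 ≤ B) (hδ : δ ≤ m * s - β)
      (h : |f (p ^ m)| ≤ B * (p : ℝ) ^ β) :
      |f (p ^ m)| * ((p : ℝ) ^ (-s)) ^ m ≤ (p : ℝ) ^ (-δ) * B := by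
    calc |f (p ^ m)| * ((p : ℝ) ^ (-s)) ^ m ≤ B * (p : ℝ) ^ β * ((p : ℝ) ^ (-s)) ^ m := by gcongr
      _ = (p : ℝ) ^ (-(m * s - β)) * B := by
        rw [mul_assoc, ← Real.rpow_mul_natCast hp₀.le, ← Real.rpow_add hp₀]
        ring_nf
      _ ≤ (p : ℝ) ^ (-δ) * B := by gcongr
  match k with
  | 0 => exact hsmall hC₁ (by simpa using hδ₁) (by simpa using h₁ p hp)
  | 1 => exact hsmall hC₂ (by simpa using hδ₂) (h₂ p hp)
  | k + 2 =>
    refine (abs_mul_rpow_neg_le hf (by linarith) hp k).trans ?_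
    gcongr
    linarith

theorem summable_abs_mul_rpow_neg (hf : HasPrimePowerGrowth α f) (hmul : f.IsMultiplicative)
    {β₁ β₂ C₁ C₂ s : ℝ} (h₁ : ∀ p : ℕ, p.Prime → |f p| ≤ C₁ * (p : ℝ) ^ β₁)
    (h₂ : ∀ p : ℕ, p.Prime → |f (p ^ 2)| ≤ C₂ * (p : ℝ) ^ β₂)
    (hs₁ : β₁ + 1 < s) (hs₂ : β₂ + 1 < 2 * s) (hs₃ : 3 * α + 1 < 3 * s) :
    Summable fun n : ℕ => |f n| * (n : ℝ) ^ (-s) := by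
  obtain ⟨δ, hδ, W, hW, hbound⟩ := hf.exists_summable_bound h₁ h₂ hs₁ hs₂ hs₃
  refine summable_of_multiplicative (fun n => by positivity) (by simp [hmul.map_one])
    (fun {m n} h => ?_) ?_
  · rw [hmul.map_mul_of_coprime h, abs_mul, Nat.cast_mul,
      Real.mul_rpow m.cast_nonneg n.cast_nonneg, mul_mul_mul_comm]
  · have hprimes : Summable fun p : Nat.Primes => (p : ℝ) ^ (-δ) :=
      Nat.Primes.summable_rpow.2 (neg_lt_neg hδ)
    refine (summable_mul_of_summable_norm hprimes.norm hW.norm).of_nonneg_of_le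
      (fun q => by positivity) fun q => ?_
    rw [Nat.cast_pow, ← Real.rpow_pow_comm (Nat.cast_nonneg _)]
    exact hbound q.1 q.1.2 q.2

end HasPrimePowerGrowth
end PrimePowers

section Cofactor

open ArithmeticFunction
open scoped ArithmeticFunction.zeta ArithmeticFunction.Moebius

/-- The power function `n ↦ n ^ k` as a real arithmetic function; its value at `0` is `0` even for
`k = 0`, so that `realPow 0` is `ζ`. -/
noncomputable def realPow (k : ℕ) : ArithmeticFunction ℝ := (ArithmeticFunction.pow k :)

theorem realPow_apply (k : ℕ) {n : ℕ} (hn : n ≠ 0) : realPow k n = (n : ℝ) ^ k := by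
  simp [realPow, pow_apply, hn]

theorem isMultiplicative_realPow (k : ℕ) : (realPow k).IsMultiplicative :=
  isMultiplicative_pow.natCast

theorem realPow_nonneg (k n : ℕ) : 0 ≤ realPow k n := by
  rw [realPow, natCoe_apply]
  positivity

theorem abs_realPow_le (k n : ℕ) : |realPow k n| ≤ (n : ℝ) ^ (k : ℝ) := by
  rw [abs_of_nonneg (realPow_nonneg k n), Real.rpow_natCast]
  obtain rfl | hn := eq_or_ne n 0
  · simp
  · rw [realPow_apply k hn]

/-- The Dirichlet inverse `n ↦ μ(n) n ^ k` of `realPow k`. -/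
noncomputable def realPowInv (k : ℕ) : ArithmeticFunction ℝ :=
  pmul (μ : ArithmeticFunction ℝ) (realPow k)

theorem isMultiplicative_realPowInv (k : ℕ) : (realPowInv k).IsMultiplicative :=
  isMultiplicative_moebius.intCast.pmul (isMultiplicative_realPow k)

theorem abs_realPowInv_le (k n : ℕ) : |realPowInv k n| ≤ (n : ℝ) ^ (k : ℝ) := by
  have hμ : |(μ n : ℝ)| ≤ 1 := mod_cast abs_moebius_le_one
  rw [realPowInv, pmul_apply, abs_mul, intCoe_apply]
  exact (mul_le_of_le_one_left (abs_nonneg _) hμ).trans (abs_realPow_le k n)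

theorem realPow_mul_realPowInv (k : ℕ) : realPow k * realPowInv k = 1 := by
  ext n
  have hterm (x : ℕ × ℕ) (hx : x ∈ n.divisorsAntidiagonal) :
      realPow k x.1 * realPowInv k x.2 = (n : ℝ) ^ k * ((ζ : ArithmeticFunction ℝ) x.1 *
        (μ : ArithmeticFunction ℝ) x.2) := by
    obtain ⟨rfl, hn⟩ := Nat.mem_divisorsAntidiagonal.1 hx
    rw [realPowInv, pmul_apply, realPow_apply k (left_ne_zero_of_mul hn),
      realPow_apply k (right_ne_zero_of_mul hn), natCoe_apply,
      zeta_apply_ne (left_ne_zero_of_mul hn), Nat.cast_mul, mul_pow, Nat.cast_one]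
    ring
  rw [mul_apply, Finset.sum_congr rfl hterm, ← Finset.mul_sum, ← mul_apply,
    coe_zeta_mul_coe_moebius]
  obtain rfl | hn := eq_or_ne n 1 <;> simp [one_apply, *]

theorem realPow_pow_apply_prime_pow {p : ℕ} (hp : p.Prime) (j d k : ℕ) :
    (realPow j ^ (d + 1)) (p ^ k) = (k + d).choose d * ((p : ℝ) ^ k) ^ j := by
  have hbase (i : ℕ) : realPow j (p ^ i) = ((p : ℝ) ^ i) ^ j := by
    rw [realPow_apply j (pow_ne_zero i hp.ne_zero), Nat.cast_pow]
  induction d generalizing k with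
  | zero => simp [hbase]
  | succ d ih =>
    have hterm (i : ℕ) (hi : i ∈ Finset.range (k + 1)) :
        (realPow j ^ (d + 1)) (p ^ i) * realPow j (p ^ (k - i)) =
          ((i + d).choose d : ℕ) * ((p : ℝ) ^ k) ^ j := by
      rw [ih, hbase, mul_assoc, ← mul_pow, ← pow_add,
        Nat.add_sub_cancel' (Finset.mem_range_succ_iff.1 hi)]
    rw [pow_succ, mul_apply_prime_pow _ _ hp, Finset.sum_congr rfl hterm, ← Finset.sum_mul,
      ← Nat.cast_sum, Nat.sum_range_add_choose, add_assoc]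

theorem natCoe_sqLift (g : ArithmeticFunction ℕ) :
    ((sqLift g : ArithmeticFunction ℕ) : ArithmeticFunction ℝ) =
      sqLift (g : ArithmeticFunction ℝ) := by
  ext n
  by_cases hn : IsSquare n
  · obtain ⟨r, rfl⟩ := hn
    simp only [natCoe_apply, sqLift_mul_self]
  · simp only [natCoe_apply, sqLift_eq_zero _ hn, Nat.cast_zero]

theorem natCoe_subgroupSum : (subgroupSum : ArithmeticFunction ℝ) =
    sqLift (totientFun : ArithmeticFunction ℝ) * realPow 0 ^ 4 := by
  rw [subgroupSum, ← pow_zero_eq_zeta, natCoe_mul, natCoe_sqLift]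
  simp only [pow_succ, pow_zero, one_mul, natCoe_mul, realPow]

theorem subgroupSum_apply_prime_pow_three {p : ℕ} (hp : p.Prime) :
    (subgroupSum : ArithmeticFunction ℝ) (p ^ 3) = 4 * p + 16 := by
  rw [natCoe_subgroupSum, sqLift_mul_apply_prime_pow _ _ hp]
  norm_num [Finset.sum_range_succ, realPow_pow_apply_prime_pow hp, Nat.choose,
    Nat.totient_prime hp, Nat.cast_pred hp.pos]
  ring

theorem subgroupSum_apply_prime_pow_six {p : ℕ} (hp : p.Prime) :
    (subgroupSum : ArithmeticFunction ℝ) (p ^ 6) = p ^ 3 + 9 * p ^ 2 + 25 * p + 49 := by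
  rw [natCoe_subgroupSum, sqLift_mul_apply_prime_pow _ _ hp]
  norm_num [Finset.sum_range_succ, realPow_pow_apply_prime_pow hp, Nat.choose,
    Nat.totient_prime hp, Nat.totient_prime_pow hp, Nat.cast_pred hp.pos]
  ring

theorem hasPrimePowerGrowth_subgroupSum :
    HasPrimePowerGrowth (1 / 2) (subgroupSum : ArithmeticFunction ℝ) := by
  rw [natCoe_subgroupSum]
  have hφ : HasPrimePowerGrowth 1 (totientFun : ArithmeticFunction ℝ) := .of_abs_le_rpow fun n => by
    rw [natCoe_apply, Nat.abs_cast, Real.rpow_one]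
    exact mod_cast n.totient_le
  have hζ : HasPrimePowerGrowth 0 (realPow 0) := .of_abs_le_rpow fun n =>
    mod_cast abs_realPow_le 0 n
  exact hφ.sqLift.mul ((hζ.mono (by norm_num)).pow (by norm_num) 4)

theorem isMultiplicative_subgroupSum : (subgroupSum : ArithmeticFunction ℝ).IsMultiplicative :=
  ((isMultiplicative_sqLift isMultiplicative_totientFun).mul (isMultiplicative_zeta.pow)).natCast

/-- The coefficients of `ζ(s - 1)⁴ ζ(2s - 3)`, which carry the poles at `s = 2` of the Dirichlet
series of `atCubes subgroupSum`. -/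
noncomputable def mainFactor : ArithmeticFunction ℝ := realPow 1 ^ 4 * sqLift (realPow 3)

theorem isMultiplicative_mainFactor : mainFactor.IsMultiplicative :=
  (isMultiplicative_realPow 1).pow.mul (isMultiplicative_sqLift (isMultiplicative_realPow 3))

/-- The Dirichlet inverse of `mainFactor`. -/
noncomputable def mainFactorInv : ArithmeticFunction ℝ :=
  realPowInv 1 ^ 4 * sqLift (realPowInv 3)

/-- The Dirichlet quotient of `atCubes subgroupSum` by `mainFactor`. -/
noncomputable def cofactor : ArithmeticFunction ℝ :=
  atCubes (subgroupSum : ArithmeticFunction ℝ) * mainFactorInv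

theorem cofactor_mul_mainFactor :
    cofactor * mainFactor = atCubes (subgroupSum : ArithmeticFunction ℝ) := by
  have hinv : mainFactor * mainFactorInv = 1 := by
    rw [mainFactor, mainFactorInv, mul_mul_mul_comm, ← mul_pow, ← sqLift_mul,
      realPow_mul_realPowInv, realPow_mul_realPowInv, sqLift_one, one_pow, one_mul]
  rw [cofactor, mul_assoc, mul_comm mainFactorInv, hinv, mul_one]

theorem isMultiplicative_cofactor : cofactor.IsMultiplicative :=
  (isMultiplicative_atCubes isMultiplicative_subgroupSum).mul <|
    (isMultiplicative_realPowInv 1).pow.mul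
      (isMultiplicative_sqLift (isMultiplicative_realPowInv 3))

theorem hasPrimePowerGrowth_cofactor : HasPrimePowerGrowth (3 / 2) cofactor := by
  have hF := hasPrimePowerGrowth_subgroupSum.atCubes
  have h₁ : HasPrimePowerGrowth 1 (realPowInv 1) := .of_abs_le_rpow fun n =>
    mod_cast abs_realPowInv_le 1 n
  have h₃ : HasPrimePowerGrowth 3 (realPowInv 3) := .of_abs_le_rpow fun n =>
    mod_cast abs_realPowInv_le 3 n
  exact (hF.mono (by norm_num)).mul (((h₁.pow zero_le_one 4).mono (by norm_num)).mul h₃.sqLift)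

theorem mainFactor_apply_prime {p : ℕ} (hp : p.Prime) : mainFactor (p ^ 1) = 4 * p := by
  rw [mainFactor, mul_comm, sqLift_mul_apply_prime_pow _ _ hp]
  norm_num [realPow_pow_apply_prime_pow hp, realPow_apply]

theorem mainFactor_apply_prime_sq {p : ℕ} (hp : p.Prime) :
    mainFactor (p ^ 2) = p ^ 3 + 10 * p ^ 2 := by
  rw [mainFactor, mul_comm, sqLift_mul_apply_prime_pow _ _ hp]
  norm_num [Finset.sum_range_succ, realPow_pow_apply_prime_pow hp, realPow_apply,
    hp.ne_zero, Nat.choose]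
  ring

theorem sum_cofactor_mul_mainFactor {p : ℕ} (hp : p.Prime) (k : ℕ) :
    ∑ i ∈ Finset.range (k + 1), cofactor (p ^ i) * mainFactor (p ^ (k - i)) =
      (subgroupSum : ArithmeticFunction ℝ) (p ^ (k * 3)) := by
  rw [← mul_apply_prime_pow _ _ hp, cofactor_mul_mainFactor, atCubes_apply, pow_mul]

theorem cofactor_apply_prime {p : ℕ} (hp : p.Prime) : cofactor (p ^ 1) = 16 := by
  have h := sum_cofactor_mul_mainFactor hp 1
  simp only [Finset.sum_range_succ, Finset.sum_range_zero, zero_add, one_mul, Nat.sub_self,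
    Nat.sub_zero, subgroupSum_apply_prime_pow_three hp, mainFactor_apply_prime hp] at h
  rw [pow_zero, isMultiplicative_cofactor.map_one, isMultiplicative_mainFactor.map_one] at h
  linarith

theorem cofactor_apply_prime_sq {p : ℕ} (hp : p.Prime) :
    cofactor (p ^ 2) = -p ^ 2 - 39 * p + 49 := by
  have h := sum_cofactor_mul_mainFactor hp 2
  simp only [Finset.sum_range_succ, Finset.sum_range_zero, zero_add, Nat.reduceMul, Nat.reduceSub,
    subgroupSum_apply_prime_pow_six hp, mainFactor_apply_prime hp, mainFactor_apply_prime_sq hp,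
    cofactor_apply_prime hp] at h
  rw [pow_zero, isMultiplicative_cofactor.map_one, isMultiplicative_mainFactor.map_one] at h
  linarith

theorem summable_abs_cofactor_mul_rpow_neg {s : ℝ} (hs : 11 / 6 < s) :
    Summable fun n : ℕ => |cofactor n| * (n : ℝ) ^ (-s) := by
  refine hasPrimePowerGrowth_cofactor.summable_abs_mul_rpow_neg isMultiplicative_cofactor
    (β₁ := 0) (β₂ := 2) (C₁ := 16) (C₂ := 89) (fun p hp => ?_) (fun p hp => ?_)
    (by linarith) (by linarith) (by linarith)
  · rw [← pow_one p, cofactor_apply_prime hp]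
    norm_num
  · have hp₁ : (1 : ℝ) ≤ p := mod_cast hp.one_lt.le
    rw [cofactor_apply_prime_sq hp, abs_le, Real.rpow_two]
    constructor <;> nlinarith

end Cofactor

section LogExpansion

open Asymptotics Filter Polynomial

theorem isBigO_rpow_of_exponent_le {a b : ℝ} (h : a ≤ b) :
    (fun y : ℝ => y ^ a) =O[𝓟 (Set.Ici 1)] fun y => y ^ b := by
  refine .of_bound' (eventually_principal.2 fun y (hy : 1 ≤ y) => ?_)
  have hy₀ : 0 ≤ y := zero_le_one.trans hy
  rw [Real.norm_of_nonneg (Real.rpow_nonneg hy₀ a), Real.norm_of_nonneg (Real.rpow_nonneg hy₀ b)]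
  exact Real.rpow_le_rpow_of_exponent_le hy h

theorem isBigO_mul_rpow {f g : ℝ → ℝ} {a b : ℝ} (hf : f =O[𝓟 (Set.Ici 1)] fun y => y ^ a)
    (hg : g =O[𝓟 (Set.Ici 1)] fun y => y ^ b) :
    (fun y => f y * g y) =O[𝓟 (Set.Ici 1)] fun y => y ^ (a + b) :=
  (hf.mul hg).congr' .rfl <| eventually_principal.2 fun _ hy =>
    (Real.rpow_add (zero_lt_one.trans_le hy) a b).symm

theorem isBigO_log_pow_rpow (n : ℕ) {δ : ℝ} (hδ : 0 < δ) :
    (fun y => Real.log y ^ n) =O[𝓟 (Set.Ici 1)] fun y => y ^ δ := by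
  have hlog {η : ℝ} (hη : 0 < η) : Real.log =O[𝓟 (Set.Ici 1)] fun y => y ^ η := by
    refine .of_bound η⁻¹ (eventually_principal.2 fun y (hy : 1 ≤ y) => ?_)
    have hy₀ : 0 ≤ y := zero_le_one.trans hy
    rw [Real.norm_of_nonneg (Real.log_nonneg hy), Real.norm_of_nonneg (Real.rpow_nonneg hy₀ η),
      inv_mul_eq_div]
    exact Real.log_le_rpow_div hy₀ hη
  induction n generalizing δ with
  | zero => simpa using isBigO_rpow_of_exponent_le hδ.le
  | succ n ih =>
    simpa only [pow_succ, add_halves] using isBigO_mul_rpow (ih (half_pos hδ)) (hlog (half_pos hδ))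

theorem isBigO_eval_log_rpow (P : ℝ[X]) {δ : ℝ} (hδ : 0 < δ) :
    (fun y => P.eval (Real.log y)) =O[𝓟 (Set.Ici 1)] fun y => y ^ δ := by
  simp only [eval_eq_sum_range]
  exact .fun_sum fun n _ => (isBigO_log_pow_rpow n hδ).const_mul_left _

/-- `HasLogExpansion d e f` says that on `[1, ∞)` the function `f` is a polynomial of degree at
most `d` in the logarithm, up to an error `O(y ^ s)` for every `s > e`. -/
def HasLogExpansion (d : ℕ) (e : ℝ) (f : ℝ → ℝ) : Prop :=
  ∃ P : ℝ[X], P.natDegree ≤ d ∧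
    ∀ s, e < s → (fun y => f y - P.eval (Real.log y)) =O[𝓟 (Set.Ici 1)] fun y => y ^ s

namespace HasLogExpansion

variable {d d' : ℕ} {e e' : ℝ} {f g : ℝ → ℝ}

theorem mono (hf : HasLogExpansion d e f) (hd : d ≤ d') (he : e ≤ e') :
    HasLogExpansion d' e' f := by
  obtain ⟨P, hP, hf⟩ := hf
  exact ⟨P, hP.trans hd, fun s hs => hf s (he.trans_lt hs)⟩

theorem congr (hf : HasLogExpansion d e f) (hfg : ∀ y, 1 ≤ y → f y = g y) :
    HasLogExpansion d e g := by
  obtain ⟨P, hP, hf⟩ := hf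
  refine ⟨P, hP, fun s hs => (hf s hs).congr' (eventually_principal.2 fun y hy => ?_) .rfl⟩
  simp only [hfg y hy]

theorem eval_log (P : ℝ[X]) (e : ℝ) :
    HasLogExpansion P.natDegree e fun y => P.eval (Real.log y) :=
  ⟨P, le_rfl, fun s _ => by simpa only [sub_self] using isBigO_zero _ _⟩

theorem of_isBigO (hf : ∀ s, e < s → f =O[𝓟 (Set.Ici 1)] fun y => y ^ s) :
    HasLogExpansion 0 e f :=
  ⟨0, natDegree_zero.le, by simpa only [eval_zero, sub_zero] using hf⟩

theorem add (hf : HasLogExpansion d e f) (hg : HasLogExpansion d e g) :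
    HasLogExpansion d e fun y => f y + g y := by
  obtain ⟨P, hP, hf⟩ := hf
  obtain ⟨Q, hQ, hg⟩ := hg
  refine ⟨P + Q, natDegree_add_le_of_degree_le hP hQ, fun s hs => ?_⟩
  simpa only [eval_add, add_sub_add_comm] using (hf s hs).add (hg s hs)

theorem sub (hf : HasLogExpansion d e f) (hg : HasLogExpansion d e g) :
    HasLogExpansion d e fun y => f y - g y := by
  obtain ⟨P, hP, hf⟩ := hf
  obtain ⟨Q, hQ, hg⟩ := hg
  refine ⟨P - Q, (natDegree_sub_le_of_le hP hQ).trans (max_self d).le, fun s hs => ?_⟩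
  simpa only [eval_sub, sub_sub_sub_comm] using (hf s hs).sub (hg s hs)

theorem sum {ι : Type*} (t : Finset ι) {F : ι → ℝ → ℝ} (hF : ∀ i ∈ t, HasLogExpansion d e (F i)) :
    HasLogExpansion d e fun y => ∑ i ∈ t, F i y := by
  induction t using Finset.induction_on with
  | empty => simpa only [Finset.sum_empty, eval_zero] using (eval_log 0 e).mono (by simp) le_rfl
  | insert a t ha ih =>
    simp only [Finset.sum_insert ha]
    exact (hF a (Finset.mem_insert_self a t)).add
      (ih fun i hi => hF i (Finset.mem_insert_of_mem hi))

theorem isBigO_rpow (hf : HasLogExpansion d e f) (he : e ≤ 0) {δ : ℝ} (hδ : 0 < δ) :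
    f =O[𝓟 (Set.Ici 1)] fun y => y ^ δ := by
  obtain ⟨P, -, hf⟩ := hf
  simpa only [sub_add_cancel] using (hf δ (he.trans_lt hδ)).add (isBigO_eval_log_rpow P hδ)

theorem mul (hf : HasLogExpansion d e f) (hg : HasLogExpansion d' e g) (he : e ≤ 0) :
    HasLogExpansion (d + d') e fun y => f y * g y := by
  have hg_bound {δ : ℝ} (hδ : 0 < δ) := hg.isBigO_rpow he hδ
  obtain ⟨P, hP, hf⟩ := hf
  obtain ⟨Q, hQ, hg⟩ := hg
  refine ⟨P * Q, natDegree_mul_le_of_le hP hQ, fun s hs => ?_⟩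
  have hδ : 0 < (s - e) / 2 := by linarith
  have ht : e < (e + s) / 2 := by linarith
  have hst : (e + s) / 2 + (s - e) / 2 = s := by ring
  have hfg := isBigO_mul_rpow (hf _ ht) (hg_bound hδ)
  have hPg := isBigO_mul_rpow (hg _ ht) (isBigO_eval_log_rpow P hδ)
  rw [hst] at hfg hPg
  refine (hfg.add hPg).congr_left fun y => ?_
  rw [eval_mul]
  ring

theorem comp_rpow (hf : HasLogExpansion d e f) {κ : ℝ} (hκ : 0 < κ) :
    HasLogExpansion d (κ * e) fun y => f (y ^ κ) := by
  obtain ⟨P, hP, hf⟩ := hf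
  refine ⟨P.comp (C κ * X), ?_, fun s hs => ?_⟩
  · simpa only [natDegree_comp, natDegree_C_mul_X κ hκ.ne', mul_one] using hP
  have hκy : Tendsto (fun y : ℝ => y ^ κ) (𝓟 (Set.Ici 1)) (𝓟 (Set.Ici 1)) :=
    tendsto_principal_principal.2 fun y hy => Real.one_le_rpow hy hκ.le
  refine ((hf (s / κ) ((lt_div_iff₀' hκ).2 hs)).comp_tendsto hκy).congr' ?_ ?_ <;>
    refine eventually_principal.2 fun y (hy : 1 ≤ y) => ?_
  · simp [Real.log_rpow (zero_lt_one.trans_le hy)]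
  · rw [Function.comp_apply, ← Real.rpow_mul (zero_le_one.trans hy), mul_div_cancel₀ _ hκ.ne']

end HasLogExpansion

end LogExpansion

section Integral

open Asymptotics Filter MeasureTheory Polynomial

theorem exists_derivative_eq (P : ℝ[X]) :
    ∃ R : ℝ[X], R.natDegree ≤ P.natDegree + 1 ∧ derivative R = P := by
  refine ⟨∑ i ∈ Finset.range (P.natDegree + 1), C (P.coeff i / (i + 1 : ℕ)) * X ^ (i + 1), ?_, ?_⟩
  · exact natDegree_sum_le_of_forall_le _ _ fun i hi => (natDegree_C_mul_X_pow_le _ _).trans <|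
      Nat.succ_le_succ (Finset.mem_range_succ_iff.1 hi)
  · conv_rhs => rw [P.as_sum_range_C_mul_X_pow]
    simp only [derivative_sum, derivative_C_mul_X_pow, Nat.add_sub_cancel]
    exact Finset.sum_congr rfl fun i _ => by
      rw [div_mul_cancel₀ _ (Nat.cast_ne_zero.2 i.succ_ne_zero)]

theorem hasDerivAt_eval_log (P : ℝ[X]) {t : ℝ} (ht : 0 < t) :
    HasDerivAt (fun t => P.eval (Real.log t)) ((derivative P).eval (Real.log t) / t) t :=
  (P.hasDerivAt (Real.log t)).comp t (Real.hasDerivAt_log ht.ne')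

theorem continuousOn_eval_log (P : ℝ[X]) :
    ContinuousOn (fun t => P.eval (Real.log t)) (Set.Ioi 0) := fun _ ht =>
  (hasDerivAt_eval_log P ht).continuousAt.continuousWithinAt

theorem measurable_eval_log (P : ℝ[X]) : Measurable fun t => P.eval (Real.log t) :=
  P.continuous.measurable.comp Real.measurable_log

theorem Icc_one_subset_Ioi_zero (y : ℝ) : Set.Icc 1 y ⊆ Set.Ioi 0 := fun _ ht =>
  zero_lt_one.trans_le ht.1

theorem integrableOn_eval_log_div (P : ℝ[X]) (y : ℝ) :
    IntegrableOn (fun t => P.eval (Real.log t) / t) (Set.Icc 1 y) :=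
  (((continuousOn_eval_log P).div continuousOn_id fun _ ht => ne_of_gt ht).mono
    (Icc_one_subset_Ioi_zero y)).integrableOn_Icc

theorem integral_eval_log_derivative_div (P : ℝ[X]) {y : ℝ} (hy : 1 ≤ y) :
    ∫ t in Set.Ioc 1 y, (derivative P).eval (Real.log t) / t =
      P.eval (Real.log y) - P.eval 0 := by
  rw [← intervalIntegral.integral_of_le hy, intervalIntegral.integral_eq_sub_of_hasDerivAt
    (f := fun t => P.eval (Real.log t)), Real.log_one]
  · rw [Set.uIcc_of_le hy]
    exact fun t ht => hasDerivAt_eval_log P (Icc_one_subset_Ioi_zero y ht)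
  · rw [intervalIntegrable_iff_integrableOn_Icc_of_le hy]
    exact integrableOn_eval_log_div _ y

variable {E : ℝ → ℝ} {s : ℝ}

theorem exists_norm_div_le_rpow_sub_one (hE : E =O[𝓟 (Set.Ici 1)] fun y => y ^ s) :
    ∃ D : ℝ, ∀ t, 1 ≤ t → ‖E t / t‖ ≤ D * t ^ (s - 1) := by
  obtain ⟨D, hD⟩ := isBigO_principal.1 hE
  refine ⟨D, fun t ht => ?_⟩
  have ht₀ : 0 < t := zero_lt_one.trans_le ht
  have hDt := hD t ht
  rw [Real.norm_of_nonneg (Real.rpow_nonneg ht₀.le s)] at hDt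
  rw [norm_div, Real.norm_of_nonneg ht₀.le, Real.rpow_sub_one ht₀.ne', ← mul_div_assoc]
  gcongr

theorem integrableOn_Ioi_div (hs : s < 0) (hm : Measurable E)
    (hE : E =O[𝓟 (Set.Ici 1)] fun y => y ^ s) :
    IntegrableOn (fun t => E t / t) (Set.Ioi 1) := by
  obtain ⟨D, hD⟩ := exists_norm_div_le_rpow_sub_one hE
  have hdom : IntegrableOn (fun t : ℝ => D * t ^ (s - 1)) (Set.Ioi 1) :=
    (integrableOn_Ioi_rpow_of_lt (by linarith) one_pos).const_mul D
  exact hdom.mono' (hm.div measurable_id).aestronglyMeasurable <|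
    ae_restrict_of_forall_mem measurableSet_Ioi fun t ht => hD t (Set.mem_Ioi.1 ht).le

theorem integral_Ioi_div_isBigO (hs : s < 0) (hE : E =O[𝓟 (Set.Ici 1)] fun y => y ^ s) :
    (fun y => ∫ t in Set.Ioi y, E t / t) =O[𝓟 (Set.Ici 1)] fun y => y ^ s := by
  obtain ⟨D, hD⟩ := exists_norm_div_le_rpow_sub_one hE
  refine .of_bound (D / -s) (eventually_principal.2 fun y (hy : 1 ≤ y) => ?_)
  have hy₀ : 0 < y := zero_lt_one.trans_le hy
  have hs₁ : s - 1 < -1 := by linarith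
  calc ‖∫ t in Set.Ioi y, E t / t‖ ≤ ∫ t in Set.Ioi y, D * t ^ (s - 1) :=
        norm_integral_le_of_norm_le ((integrableOn_Ioi_rpow_of_lt hs₁ hy₀).const_mul D) <|
          ae_restrict_of_forall_mem measurableSet_Ioi fun t ht =>
            hD t (hy.trans (Set.mem_Ioi.1 ht).le)
    _ = D / -s * ‖y ^ s‖ := by
        rw [integral_const_mul, integral_Ioi_rpow_of_lt hs₁ hy₀, sub_add_cancel,
          Real.norm_of_nonneg (Real.rpow_nonneg hy₀.le s)]
        ring

theorem hasLogExpansion_integral_div_of_isBigO {e : ℝ} (he : e < 0) (hm : Measurable E)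
    (hE : ∀ s, e < s → E =O[𝓟 (Set.Ici 1)] fun y => y ^ s) :
    HasLogExpansion 0 e fun y => ∫ t in Set.Ioc 1 y, E t / t := by
  have hint : IntegrableOn (fun t => E t / t) (Set.Ioi 1) :=
    integrableOn_Ioi_div (by linarith) hm (hE (e / 2) (by linarith))
  have htail : HasLogExpansion 0 e fun y => ∫ t in Set.Ioi y, E t / t := by
    refine .of_isBigO fun s hs => ?_
    have ht : e < min s (e / 2) := lt_min hs (by linarith)
    have ht₀ : min s (e / 2) < 0 := (min_le_right _ _).trans_lt (by linarith)
    exact (integral_Ioi_div_isBigO ht₀ (hE _ ht)).trans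
      (isBigO_rpow_of_exponent_le (min_le_left _ _))
  have hconst := HasLogExpansion.eval_log (C (∫ t in Set.Ioi 1, E t / t)) e
  rw [natDegree_C] at hconst
  refine (hconst.sub htail).congr fun y hy => ?_
  rw [eval_C, ← Set.Ioc_union_Ioi_eq_Ioi hy, setIntegral_union Set.Ioc_disjoint_Ioi_same
    measurableSet_Ioi (hint.mono_set Set.Ioc_subset_Ioi_self)
    (hint.mono_set (Set.Ioi_subset_Ioi hy)), add_sub_cancel_right]

theorem HasLogExpansion.integral_div {d : ℕ} {e : ℝ} {f : ℝ → ℝ} (hf : HasLogExpansion d e f)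
    (he : e < 0) (hm : Measurable f) :
    HasLogExpansion (d + 1) e fun y => ∫ t in Set.Ioc 1 y, f t / t := by
  obtain ⟨P, hP, hf⟩ := hf
  obtain ⟨R, hR, rfl⟩ := exists_derivative_eq P
  have hEm : Measurable fun t => f t - (derivative R).eval (Real.log t) :=
    hm.sub (measurable_eval_log _)
  have hmain := (HasLogExpansion.eval_log (R - C (R.eval 0)) e).mono
    ((natDegree_sub_C.trans_le hR).trans (Nat.succ_le_succ hP)) le_rfl
  have herror := (hasLogExpansion_integral_div_of_isBigO he hEm hf).mono d.succ.zero_le le_rfl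
  refine (hmain.add herror).congr fun y hy => ?_
  have hEint := integrableOn_Ioi_div (by linarith) hEm (hf (e / 2) (by linarith))
  rw [eval_sub, eval_C, ← integral_eval_log_derivative_div R hy, ← integral_add
    ((integrableOn_eval_log_div _ y).mono_set Set.Ioc_subset_Icc_self)
    (hEint.mono_set Set.Ioc_subset_Ioi_self)]
  simp only [← add_div, add_sub_cancel]

end Integral

section AbelSummation

open Asymptotics Filter MeasureTheory Polynomial

theorem measurable_summatory (c : ℕ → ℝ) : Measurable (summatory c) :=
  (measurable_from_nat (f := fun N => ∑ n ∈ Finset.Icc 0 N, c n)).comp Nat.measurable_floor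

theorem hasDerivAt_eval_log_mul_rpow (Q : ℝ[X]) (σ : ℝ) {t : ℝ} (ht : 0 < t) :
    HasDerivAt (fun t => Q.eval (Real.log t) * t ^ (-σ))
      ((derivative Q - C σ * Q).eval (Real.log t) * t ^ (-σ) / t) t := by
  refine ((hasDerivAt_eval_log Q ht).mul
    (Real.hasDerivAt_rpow_const (.inl ht.ne'))).congr_deriv ?_
  rw [Real.rpow_sub_one ht.ne', eval_sub, eval_mul, eval_C]
  ring

theorem summatory_eval_log_mul (c : ArithmeticFunction ℝ) (Q : ℝ[X]) (σ y : ℝ) :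
    summatory (fun k => Q.eval (Real.log k) * ((k : ℝ) ^ (-σ) * c k)) y =
      Q.eval (Real.log y) * (y ^ (-σ) * summatory c y) -
        ∫ t in Set.Ioc 1 y,
          (derivative Q - C σ * Q).eval (Real.log t) * (t ^ (-σ) * summatory c t) / t := by
  have hderiv {t : ℝ} (ht : t ∈ Set.Icc 1 y) :=
    hasDerivAt_eval_log_mul_rpow Q σ (Icc_one_subset_Ioi_zero y ht)
  have hint : IntegrableOn (deriv fun t => Q.eval (Real.log t) * t ^ (-σ)) (Set.Icc 1 y) := by
    refine IntegrableOn.congr_fun (ContinuousOn.integrableOn_Icc ?_)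
      (fun t ht => (hderiv ht).deriv.symm) measurableSet_Icc
    refine (((continuousOn_eval_log _).mul ?_).div continuousOn_id fun _ ht => ne_of_gt ht).mono
      (Icc_one_subset_Ioi_zero y)
    exact continuousOn_id.rpow_const fun _ ht => .inl (ne_of_gt ht)
  have habel := sum_mul_eq_sub_integral_mul₀ c c.map_zero y
    (fun t ht => (hderiv ht).differentiableAt) hint
  simp only [summatory, ← mul_assoc]
  rw [habel]
  congr 1
  refine setIntegral_congr_fun measurableSet_Ioc fun t ht => ?_
  simp only [(hderiv (Set.Ioc_subset_Icc_self ht)).deriv]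
  ring

theorem HasLogExpansion.summatory_eval_log_mul {c : ArithmeticFunction ℝ} {d : ℕ} {e σ : ℝ}
    (hc : HasLogExpansion d e fun y => y ^ (-σ) * summatory c y) (he : e < 0) (Q : ℝ[X]) :
    HasLogExpansion (d + 1 + Q.natDegree) e
      (summatory fun k => Q.eval (Real.log k) * ((k : ℝ) ^ (-σ) * c k)) := by
  have hdeg : (derivative Q - C σ * Q).natDegree ≤ Q.natDegree :=
    (natDegree_sub_le_of_le ((natDegree_derivative_le Q).trans (Nat.sub_le _ 1))
      (natDegree_C_mul_le σ Q)).trans (max_self _).le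
  have hm : Measurable fun y : ℝ => y ^ (-σ) * summatory c y :=
    (measurable_id.pow_const (-σ)).mul (measurable_summatory c)
  have hboundary := (eval_log Q e).mul hc he.le
  have hintegral := ((eval_log (derivative Q - C σ * Q) e).mul hc he.le).integral_div he
    ((measurable_eval_log _).mul hm)
  refine ((hboundary.mono (by lia) le_rfl).sub (hintegral.mono (by lia) le_rfl)).congr
    fun y _ => (_root_.summatory_eval_log_mul c Q σ y).symm

theorem hasLogExpansion_summatory_of_summable {α : ℕ → ℝ} {e : ℝ} (he : e < 0)
    (hα : ∀ s, e < s → Summable fun k : ℕ => |α k| * (k : ℝ) ^ (-s)) :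
    HasLogExpansion 0 e (summatory α) := by
  have hα₀ : Summable α := .of_abs <| by simpa using hα 0 he
  refine ⟨C (∑' k, α k), (natDegree_C _).le, fun s hs => ?_⟩
  have ht : e < min s 0 := lt_min hs he
  refine IsBigO.trans ?_ (isBigO_rpow_of_exponent_le (min_le_left s 0))
  refine .of_bound (∑' k : ℕ, |α k| * (k : ℝ) ^ (-min s 0))
    (eventually_principal.2 fun y (hy : 1 ≤ y) => ?_)
  have hy₀ : 0 < y := zero_lt_one.trans_le hy
  rw [eval_C, summatory, ← hα₀.sum_add_tsum_compl (s := Finset.Icc 0 ⌊y⌋₊), sub_add_cancel_left,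
    norm_neg, tsum_subtype, Real.norm_of_nonneg (Real.rpow_nonneg hy₀.le _)]
  refine tsum_of_norm_bounded ((hα _ ht).hasSum.mul_right _) fun k => ?_
  by_cases hk : k ∈ Finset.Icc 0 ⌊y⌋₊
  · rw [Set.indicator_of_notMem (by simpa using hk), norm_zero]
    positivity
  have hyk : y ≤ k := by
    rw [Finset.mem_Icc, not_and, not_le] at hk
    exact (Nat.lt_of_floor_lt (hk k.zero_le)).le
  rw [Set.indicator_of_mem (by simpa using hk), Real.norm_eq_abs, mul_assoc]
  refine le_mul_of_one_le_right (abs_nonneg _) ?_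
  rw [Real.rpow_neg k.cast_nonneg, inv_mul_eq_div,
    one_le_div (Real.rpow_pos_of_pos (hy₀.trans_le hyk) _)]
  exact Real.rpow_le_rpow_of_nonpos hy₀ hyk (min_le_right s 0)

theorem hasLogExpansion_summatory_eval_log_mul {α : ℕ → ℝ} {e : ℝ} (he : e < 0)
    (hα : ∀ s, e < s → Summable fun k : ℕ => |α k| * (k : ℝ) ^ (-s)) (Q : ℝ[X]) :
    HasLogExpansion 0 e (summatory fun k => Q.eval (Real.log k) * α k) := by
  refine hasLogExpansion_summatory_of_summable he fun s hs => ?_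
  have hδ : 0 < (s - e) / 2 := by linarith
  obtain ⟨D, hD⟩ := isBigO_principal.1 (isBigO_eval_log_rpow Q hδ)
  refine ((hα ((s + e) / 2) (by linarith)).mul_left D).of_norm_bounded_eventually_nat ?_
  filter_upwards [eventually_ge_atTop 1] with k hk
  have hk₁ : (1 : ℝ) ≤ k := mod_cast hk
  have hk₀ : (0 : ℝ) < k := zero_lt_one.trans_le hk₁
  have hDk := hD k hk₁
  rw [Real.norm_eq_abs, Real.norm_of_nonneg (by positivity)] at hDk
  have hexp : (k : ℝ) ^ ((s - e) / 2) * (k : ℝ) ^ (-s) = (k : ℝ) ^ (-((s + e) / 2)) := by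
    rw [← Real.rpow_add hk₀]
    ring_nf
  calc ‖|Q.eval (Real.log k) * α k| * (k : ℝ) ^ (-s)‖
      = |Q.eval (Real.log k)| * (|α k| * (k : ℝ) ^ (-s)) := by
        rw [Real.norm_of_nonneg (by positivity), abs_mul, mul_assoc]
    _ ≤ D * (k : ℝ) ^ ((s - e) / 2) * (|α k| * (k : ℝ) ^ (-s)) := by gcongr
    _ = D * (|α k| * (k : ℝ) ^ (-((s + e) / 2))) := by
        rw [← hexp]
        ring

end AbelSummation

section Hyperbola

open Asymptotics Filter Polynomial

theorem summatory_eq_sum_Ioc {c : ℕ → ℝ} (hc : c 0 = 0) (y : ℝ) :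
    summatory c y = ∑ n ∈ Finset.Ioc 0 ⌊y⌋₊, c n := by
  rw [summatory, Finset.Icc_eq_cons_Ioc (Nat.zero_le _), Finset.sum_cons, hc, zero_add]

theorem summatory_mul (a b : ArithmeticFunction ℝ) (y : ℝ) :
    summatory (a * b : ArithmeticFunction ℝ) y =
      summatory (fun k => a k * summatory b (y / k)) y := by
  rw [summatory_eq_sum_Ioc (a * b).map_zero, ArithmeticFunction.sum_Ioc_mul_eq_sum_sum,
    summatory_eq_sum_Ioc (by simp)]
  simp only [summatory_eq_sum_Ioc b.map_zero, Nat.floor_div_natCast]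

/-- The restriction of an arithmetic function to the integers up to `K`, extended by zero. -/
noncomputable def truncate (a : ArithmeticFunction ℝ) (K : ℝ) : ArithmeticFunction ℝ :=
  ⟨fun n => if (n : ℝ) ≤ K then a n else 0, by simp⟩

theorem truncate_of_le (a : ArithmeticFunction ℝ) {K : ℝ} {n : ℕ} (hn : (n : ℝ) ≤ K) :
    truncate a K n = a n :=
  if_pos hn

theorem truncate_of_lt (a : ArithmeticFunction ℝ) {K : ℝ} {n : ℕ} (hn : K < n) :
    truncate a K n = 0 :=
  if_neg hn.not_ge

theorem summatory_truncate_mul (a : ArithmeticFunction ℝ) (u : ℕ → ℝ) {K y : ℝ} (hK : 0 ≤ K)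
    (hKy : K ≤ y) :
    summatory (fun k => truncate a K k * u k) y = summatory (fun k => a k * u k) K := by
  have hsub : Finset.Icc 0 ⌊K⌋₊ ⊆ Finset.Icc 0 ⌊y⌋₊ :=
    Finset.Icc_subset_Icc_right (Nat.floor_le_floor hKy)
  refine (Finset.sum_subset_zero_on_sdiff hsub (fun k hk => ?_) fun k hk => ?_).symm
  · have hKk : K < k := by
      rw [Finset.mem_sdiff, Finset.mem_Icc, Finset.mem_Icc, not_and, not_le] at hk
      exact Nat.lt_of_floor_lt (hk.2 k.zero_le)
    rw [truncate_of_lt a hKk, zero_mul]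
  · rw [truncate_of_le a ((Nat.le_floor_iff hK).1 (Finset.mem_Icc.1 hk).2)]

theorem summatory_truncate_of_le (a : ArithmeticFunction ℝ) {K y : ℝ} (hK : 0 ≤ K) (hKy : K ≤ y) :
    summatory (truncate a K) y = summatory a K := by
  simpa only [mul_one] using summatory_truncate_mul a (fun _ => 1) hK hKy

theorem summatory_truncate_mul_truncate (a b : ArithmeticFunction ℝ) {K M : ℝ} (hK : 0 ≤ K)
    (hM : 1 ≤ M) :
    summatory (truncate a K * truncate b M : ArithmeticFunction ℝ) (K * M) =
      summatory a K * summatory b M := by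
  rw [summatory_mul, summatory_truncate_mul a _ hK (le_mul_of_one_le_right hK hM), summatory,
    summatory, Finset.sum_mul]
  refine Finset.sum_congr rfl fun k hk => ?_
  obtain rfl | hk₀ := k.eq_zero_or_pos
  · simp
  have hkK : (k : ℝ) ≤ K := (Nat.le_floor_iff hK).1 (Finset.mem_Icc.1 hk).2
  have hM₀ : 0 ≤ M := zero_le_one.trans hM
  rw [summatory_truncate_of_le b hM₀]
  rw [le_div_iff₀' (mod_cast hk₀)]
  gcongr

theorem summatory_sub_truncate_mul_sub_truncate (a b : ArithmeticFunction ℝ) {K M : ℝ}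
    (hK : 0 ≤ K) (hM : 0 ≤ M) :
    summatory ((a - truncate a K) * (b - truncate b M) : ArithmeticFunction ℝ) (K * M) = 0 := by
  refine Finset.sum_eq_zero fun n hn => ?_
  have hnKM : (n : ℝ) ≤ K * M :=
    (Nat.le_floor_iff (mul_nonneg hK hM)).1 (Finset.mem_Icc.1 hn).2
  rw [ArithmeticFunction.mul_apply]
  refine Finset.sum_eq_zero fun p hp => ?_
  rw [← (Nat.mem_divisorsAntidiagonal.1 hp).1, Nat.cast_mul] at hnKM
  simp only [sub_eq_add_neg, ArithmeticFunction.add_apply, ArithmeticFunction.neg_apply]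
  obtain h | h := le_or_gt (p.1 : ℝ) K
  · rw [truncate_of_le a h, add_neg_cancel, zero_mul]
  · have hpM : (p.2 : ℝ) ≤ M := by
      by_contra! hMp
      exact hnKM.not_gt (mul_lt_mul'' h hMp hK hM)
    rw [truncate_of_le b hpM, add_neg_cancel, mul_zero]

theorem summatory_mul_eq_hyperbola (a b : ArithmeticFunction ℝ) {K M : ℝ} (hK : 1 ≤ K)
    (hM : 1 ≤ M) :
    summatory (a * b : ArithmeticFunction ℝ) (K * M) =
      summatory (fun k => a k * summatory b (K * M / k)) K +
        summatory (fun k => b k * summatory a (K * M / k)) M - summatory a K * summatory b M := by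
  have hK₀ : 0 ≤ K := zero_le_one.trans hK
  have hM₀ : 0 ≤ M := zero_le_one.trans hM
  have hsplit : a * b = truncate a K * b + truncate b M * a - truncate a K * truncate b M +
      (a - truncate a K) * (b - truncate b M) := by ring
  rw [← summatory_truncate_mul a _ hK₀ (le_mul_of_one_le_right hK₀ hM),
    ← summatory_truncate_mul b _ hM₀ (le_mul_of_one_le_left hM₀ hK), ← summatory_mul,
    ← summatory_mul, ← summatory_truncate_mul_truncate a b hK₀ hM, ← add_zero (_ - _),
    ← summatory_sub_truncate_mul_sub_truncate a b hK₀ hM₀, hsplit]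
  simp only [summatory, ArithmeticFunction.add_apply, sub_eq_add_neg, ArithmeticFunction.neg_apply,
    Finset.sum_add_distrib, Finset.sum_neg_distrib]

end Hyperbola

section Convolution

open Asymptotics Filter Polynomial

theorem eval_sub_eq_sum_hasseDeriv (Q : ℝ[X]) (u v : ℝ) :
    Q.eval (u - v) = ∑ i ∈ Finset.range (Q.natDegree + 1),
      u ^ i * ((hasseDeriv i Q).comp (-X)).eval v := by
  rw [sub_eq_add_neg, ← taylor_eval, eval_eq_sum_range, natDegree_taylor]
  simp only [taylor_coeff, eval_comp, eval_neg, eval_X, mul_comm]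

theorem natDegree_hasseDeriv_comp_neg_le (Q : ℝ[X]) (i : ℕ) :
    ((hasseDeriv i Q).comp (-X)).natDegree ≤ Q.natDegree - i := by
  rw [natDegree_comp, natDegree_neg, natDegree_X, mul_one]
  exact natDegree_hasseDeriv_le Q i

theorem hasLogExpansion_summatory_mul_eval_log_sub_log {α : ℕ → ℝ} {r : ℕ} {e : ℝ} (he : e ≤ 0)
    (hα : ∀ Q : ℝ[X],
      HasLogExpansion (r + Q.natDegree) e (summatory fun k => Q.eval (Real.log k) * α k))
    (Q : ℝ[X]) {κ : ℝ} (hκ : 0 < κ) :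
    HasLogExpansion (r + Q.natDegree) (κ * e) fun y =>
      summatory (fun k => α k * Q.eval (Real.log y - Real.log k)) (y ^ κ) := by
  have hexpand (y : ℝ) : summatory (fun k => α k * Q.eval (Real.log y - Real.log k)) (y ^ κ) =
      ∑ i ∈ Finset.range (Q.natDegree + 1), (X ^ i : ℝ[X]).eval (Real.log y) *
        summatory (fun k => ((hasseDeriv i Q).comp (-X)).eval (Real.log k) * α k) (y ^ κ) := by
    simp only [summatory, Finset.mul_sum, eval_sub_eq_sum_hasseDeriv, eval_pow, eval_X]
    rw [Finset.sum_comm]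
    exact Finset.sum_congr rfl fun _ _ => Finset.sum_congr rfl fun _ _ => by ring
  refine (HasLogExpansion.sum _ fun i hi => ?_).congr fun y _ => (hexpand y).symm
  have hiQ : i ≤ Q.natDegree := Finset.mem_range_succ_iff.1 hi
  have hdeg := natDegree_hasseDeriv_comp_neg_le Q i
  refine ((HasLogExpansion.eval_log (X ^ i) (κ * e)).mul ((hα _).comp_rpow hκ)
    (mul_nonpos_of_nonneg_of_nonpos hκ.le he)).mono ?_ le_rfl
  rw [natDegree_X_pow]
  lia

theorem isBigO_summatory_mul_comp_div {E : ℝ → ℝ} {s : ℝ} (hE : E =O[𝓟 (Set.Ici 1)] fun y => y ^ s)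
    {α : ℕ → ℝ} (hα₀ : α 0 = 0) {κ : ℝ} (hκ : κ ≤ 1) :
    (fun y => summatory (fun k => α k * E (y / k)) (y ^ κ)) =O[𝓟 (Set.Ici 1)]
      fun y => summatory (fun k => |α k| * (y / k) ^ s) (y ^ κ) := by
  obtain ⟨D, hD⟩ := isBigO_principal.1 hE
  refine .of_bound D (eventually_principal.2 fun y (hy : 1 ≤ y) => ?_)
  have hy₀ : 0 ≤ y := zero_le_one.trans hy
  have hnonneg : 0 ≤ summatory (fun k => |α k| * (y / k) ^ s) (y ^ κ) :=
    Finset.sum_nonneg fun k _ => by positivity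
  rw [Real.norm_of_nonneg hnonneg, summatory, summatory, Finset.mul_sum]
  refine norm_sum_le_of_le _ fun k hk => ?_
  obtain rfl | hk₀ := k.eq_zero_or_pos
  · simp [hα₀]
  have hky : (k : ℝ) ≤ y :=
    ((Nat.le_floor_iff (Real.rpow_nonneg hy₀ κ)).1 (Finset.mem_Icc.1 hk).2).trans
      (Real.rpow_le_self_of_one_le hy hκ)
  have hbound := hD (y / k) ((one_le_div (mod_cast hk₀)).2 hky)
  rw [Real.norm_of_nonneg (r := (y / k) ^ s) (by positivity)] at hbound
  calc ‖α k * E (y / k)‖ = |α k| * ‖E (y / k)‖ := norm_mul _ _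
    _ ≤ |α k| * (D * (y / k) ^ s) := by gcongr
    _ = D * (|α k| * (y / k) ^ s) := mul_left_comm _ _ _

theorem HasLogExpansion.summatory_mul_comp_div {α : ℕ → ℝ} {B : ℝ → ℝ} {r q : ℕ} {e f g κ : ℝ}
    (hα₀ : α 0 = 0) (he : e ≤ 0)
    (hα : ∀ Q : ℝ[X],
      HasLogExpansion (r + Q.natDegree) e (summatory fun k => Q.eval (Real.log k) * α k))
    (hB : HasLogExpansion q f B) (hκ₀ : 0 < κ) (hκ₁ : κ ≤ 1) (hg : κ * e ≤ g)
    (herror : ∀ s', g < s' → ∃ s, f < s ∧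
      (fun y => summatory (fun k => |α k| * (y / k) ^ s) (y ^ κ)) =O[𝓟 (Set.Ici 1)]
        fun y => y ^ s') :
    HasLogExpansion (r + q) g fun y => summatory (fun k => α k * B (y / k)) (y ^ κ) := by
  obtain ⟨Q, hQ, hB⟩ := hB
  have hmain := (hasLogExpansion_summatory_mul_eval_log_sub_log he hα Q hκ₀).mono
    (Nat.add_le_add_left hQ r) hg
  have hrest : HasLogExpansion 0 g fun y =>
      summatory (fun k => α k * (B (y / k) - Q.eval (Real.log (y / k)))) (y ^ κ) := by
    refine .of_isBigO fun s' hs' => ?_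
    obtain ⟨s, hs, hsum⟩ := herror s' hs'
    exact (isBigO_summatory_mul_comp_div (hB s hs) hα₀ hκ₁).trans hsum
  refine (hmain.add (hrest.mono (Nat.zero_le _) le_rfl)).congr fun y hy => ?_
  rw [summatory, summatory, summatory, ← Finset.sum_add_distrib]
  refine Finset.sum_congr rfl fun k _ => ?_
  obtain rfl | hk := eq_or_ne k 0
  · simp [hα₀]
  · rw [Real.log_div (zero_lt_one.trans_le hy).ne' (Nat.cast_ne_zero.2 hk)]
    ring

theorem isBigO_summatory_mul_rpow_div {α : ℕ → ℝ} (hα₀ : α 0 = 0) {δ s κ : ℝ} (hs : s ≤ 0)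
    (hκ : 0 < κ) (hα : summatory (fun k => |α k|) =O[𝓟 (Set.Ici 1)] fun y => y ^ δ) :
    (fun y => summatory (fun k => |α k| * (y / k) ^ s) (y ^ κ)) =O[𝓟 (Set.Ici 1)]
      fun y => y ^ ((1 - κ) * s + κ * δ) := by
  obtain ⟨D, hD⟩ := isBigO_principal.1 hα
  refine .of_bound D (eventually_principal.2 fun y (hy : 1 ≤ y) => ?_)
  have hy₀ : 0 < y := zero_lt_one.trans_le hy
  have hbound := hD (y ^ κ) (Real.one_le_rpow hy hκ.le)
  rw [← Real.rpow_mul hy₀.le, summatory,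
    Real.norm_of_nonneg (Finset.sum_nonneg fun k _ => abs_nonneg _),
    Real.norm_of_nonneg (Real.rpow_nonneg hy₀.le _)] at hbound
  rw [summatory, Real.norm_of_nonneg (Finset.sum_nonneg fun k _ => by positivity),
    Real.norm_of_nonneg (Real.rpow_nonneg hy₀.le _)]
  calc ∑ k ∈ Finset.Icc 0 ⌊y ^ κ⌋₊, |α k| * (y / k) ^ s
      ≤ ∑ k ∈ Finset.Icc 0 ⌊y ^ κ⌋₊, |α k| * y ^ ((1 - κ) * s) := by
        refine Finset.sum_le_sum fun k hk => ?_
        obtain rfl | hk₀ := k.eq_zero_or_pos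
        · simp [hα₀]
        have hk₀ : (0 : ℝ) < k := mod_cast hk₀
        have hky : (k : ℝ) ≤ y ^ κ :=
          (Nat.le_floor_iff (Real.rpow_nonneg hy₀.le κ)).1 (Finset.mem_Icc.1 hk).2
        have hdiv : y ^ (1 - κ) ≤ y / k := by
          rw [Real.rpow_sub hy₀, Real.rpow_one]
          exact div_le_div_of_nonneg_left hy₀.le hk₀ hky
        rw [Real.rpow_mul hy₀.le]
        exact mul_le_mul_of_nonneg_left
          (Real.rpow_le_rpow_of_nonpos (Real.rpow_pos_of_pos hy₀ _) hdiv hs) (abs_nonneg _)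
    _ = (∑ k ∈ Finset.Icc 0 ⌊y ^ κ⌋₊, |α k|) * y ^ ((1 - κ) * s) := (Finset.sum_mul _ _ _).symm
    _ ≤ D * y ^ (κ * δ) * y ^ ((1 - κ) * s) := by gcongr
    _ = D * y ^ ((1 - κ) * s + κ * δ) := by
        rw [mul_assoc, ← Real.rpow_add hy₀, add_comm (κ * δ)]

theorem isBigO_summatory_mul_rpow_div_of_summable {α : ℕ → ℝ} {s : ℝ}
    (hα : Summable fun k : ℕ => |α k| * (k : ℝ) ^ (-s)) :
    (fun y => summatory (fun k => |α k| * (y / k) ^ s) y) =O[𝓟 (Set.Ici 1)] fun y => y ^ s := by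
  refine .of_bound (∑' k : ℕ, |α k| * (k : ℝ) ^ (-s))
    (eventually_principal.2 fun y (hy : 1 ≤ y) => ?_)
  have hy₀ : 0 < y := zero_lt_one.trans_le hy
  have hterm (k : ℕ) : |α k| * (y / k) ^ s = |α k| * (k : ℝ) ^ (-s) * y ^ s := by
    rw [Real.div_rpow hy₀.le k.cast_nonneg, Real.rpow_neg k.cast_nonneg]
    ring
  rw [summatory, Real.norm_of_nonneg (Finset.sum_nonneg fun k _ => by positivity),
    Real.norm_of_nonneg (by positivity)]
  simp only [hterm, ← Finset.sum_mul]
  gcongr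
  exact hα.sum_le_tsum _ fun k _ => by positivity

theorem rpow_neg_mul_summatory_mul_comp_div (a : ℕ → ℝ) (B : ℝ → ℝ) (σ : ℝ) (ha : a 0 = 0)
    {y : ℝ} (hy : 0 < y) (K : ℝ) :
    y ^ (-σ) * summatory (fun k => a k * B (y / k)) K =
      summatory (fun k => (k : ℝ) ^ (-σ) * a k * ((y / k) ^ (-σ) * B (y / k))) K := by
  rw [summatory, summatory, Finset.mul_sum]
  refine Finset.sum_congr rfl fun k _ => ?_
  obtain rfl | hk := k.eq_zero_or_pos
  · simp [ha]
  have hk : (0 : ℝ) < k := mod_cast hk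
  rw [Real.div_rpow hy.le hk.le]
  have hkσ := (Real.rpow_pos_of_pos hk (-σ)).ne'
  field_simp

theorem HasLogExpansion.summatory_mul_comp_div_of_nonneg {a : ArithmeticFunction ℝ} {B : ℝ → ℝ}
    {p q : ℕ} {e f g κ σ : ℝ} (ha : ∀ k, 0 ≤ a k)
    (hA : HasLogExpansion p e fun y => y ^ (-σ) * summatory a y) (hB : HasLogExpansion q f B)
    (he : e < 0) (hf : f < 0) (hκ₀ : 0 < κ) (hκ₁ : κ < 1) (heg : κ * e ≤ g)
    (hfg : (1 - κ) * f ≤ g) :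
    HasLogExpansion (p + 1 + q) g fun y =>
      summatory (fun k => (k : ℝ) ^ (-σ) * a k * B (y / k)) (y ^ κ) := by
  have hα := hA.summatory_eval_log_mul he
  refine .summatory_mul_comp_div (by simp) he.le hα hB hκ₀ hκ₁.le heg fun s' hs' => ?_
  have hδ : 0 < (s' - g) / 2 := by linarith
  have habs (k : ℕ) : |(k : ℝ) ^ (-σ) * a k| = (k : ℝ) ^ (-σ) * a k :=
    abs_of_nonneg (mul_nonneg (by positivity) (ha k))
  have hbound : summatory (fun k => |(k : ℝ) ^ (-σ) * a k|) =O[𝓟 (Set.Ici 1)]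
      fun y => y ^ ((s' - g) / 2) := by
    simpa only [eval_one, one_mul, habs] using (hα 1).isBigO_rpow he.le hδ
  refine ⟨min (f + (s' - g) / 2) 0, lt_min (by linarith) hf,
    (isBigO_summatory_mul_rpow_div (by simp) (min_le_right _ _) hκ₀ hbound).trans
      (isBigO_rpow_of_exponent_le ?_)⟩
  have hmin : min (f + (s' - g) / 2) 0 ≤ f + (s' - g) / 2 := min_le_left _ _
  nlinarith

theorem HasLogExpansion.summatory_mul {a b : ArithmeticFunction ℝ} {p q : ℕ} {e f κ σ : ℝ}
    (ha : ∀ k, 0 ≤ a k) (hb : ∀ k, 0 ≤ b k)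
    (hA : HasLogExpansion p e fun y => y ^ (-σ) * summatory a y)
    (hB : HasLogExpansion q f fun y => y ^ (-σ) * summatory b y)
    (he : e < 0) (hf : f < 0) (hκ₀ : 0 < κ) (hκ₁ : κ < 1) :
    HasLogExpansion (p + q + 1) (max (κ * e) ((1 - κ) * f)) fun y =>
      y ^ (-σ) * summatory (a * b : ArithmeticFunction ℝ) y := by
  have hκ₂ : 0 < 1 - κ := sub_pos.2 hκ₁
  have heg := le_max_left (κ * e) ((1 - κ) * f)
  have hfg := le_max_right (κ * e) ((1 - κ) * f)
  have hg : max (κ * e) ((1 - κ) * f) ≤ 0 :=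
    max_le (mul_nonpos_of_nonneg_of_nonpos hκ₀.le he.le)
      (mul_nonpos_of_nonneg_of_nonpos hκ₂.le hf.le)
  have hfirst := hA.summatory_mul_comp_div_of_nonneg ha hB he hf hκ₀ hκ₁ heg hfg
  have hsecond := hB.summatory_mul_comp_div_of_nonneg hb hA hf he hκ₂ (sub_lt_self 1 hκ₀) hfg
    (by rwa [sub_sub_cancel])
  have hcorner := ((hA.comp_rpow hκ₀).mono le_rfl heg).mul ((hB.comp_rpow hκ₂).mono le_rfl hfg) hg
  refine (((hfirst.mono (by lia) le_rfl).add (hsecond.mono (by lia) le_rfl)).sub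
    (hcorner.mono (by lia) le_rfl)).congr fun y hy => ?_
  have hy₀ : 0 < y := zero_lt_one.trans_le hy
  have hsplit : y ^ κ * y ^ (1 - κ) = y := by
    rw [← Real.rpow_add hy₀, add_sub_cancel, Real.rpow_one]
  have hhyperbola := summatory_mul_eq_hyperbola a b (Real.one_le_rpow hy hκ₀.le)
    (Real.one_le_rpow hy hκ₂.le)
  rw [hsplit] at hhyperbola
  rw [hhyperbola, mul_sub, mul_add,
    rpow_neg_mul_summatory_mul_comp_div a (summatory b) σ a.map_zero hy₀,
    rpow_neg_mul_summatory_mul_comp_div b (summatory a) σ b.map_zero hy₀]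
  have hsplit_neg : y ^ (-σ) = (y ^ κ) ^ (-σ) * (y ^ (1 - κ)) ^ (-σ) := by
    rw [← Real.mul_rpow (Real.rpow_nonneg hy₀.le _) (Real.rpow_nonneg hy₀.le _), hsplit]
  rw [sub_right_inj, hsplit_neg]
  ring

theorem HasLogExpansion.summatory_mul_of_summable {a b : ArithmeticFunction ℝ} {q : ℕ} {f σ : ℝ}
    (ha : ∀ s, f < s → Summable fun k : ℕ => |(k : ℝ) ^ (-σ) * a k| * (k : ℝ) ^ (-s))
    (hB : HasLogExpansion q f fun y => y ^ (-σ) * summatory b y) (hf : f < 0) :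
    HasLogExpansion q f fun y => y ^ (-σ) * summatory (a * b : ArithmeticFunction ℝ) y := by
  have hsum := HasLogExpansion.summatory_mul_comp_div (r := 0) (κ := 1) (g := f) (by simp) hf.le
    (fun Q => (hasLogExpansion_summatory_eval_log_mul hf ha Q).mono (Nat.zero_le _) le_rfl) hB
    one_pos le_rfl (one_mul f).le
    fun s hs => ⟨s, hs, by
      simpa only [Real.rpow_one] using isBigO_summatory_mul_rpow_div_of_summable (ha s hs)⟩
  refine (hsum.mono (zero_add q).le le_rfl).congr fun y hy => ?_
  rw [_root_.summatory_mul, Real.rpow_one,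
    rpow_neg_mul_summatory_mul_comp_div a (summatory b) σ a.map_zero (zero_lt_one.trans_le hy)]

end Convolution

section Conclusion

open ArithmeticFunction Asymptotics Filter Polynomial

theorem summatory_realPow (j : ℕ) (y : ℝ) :
    summatory (realPow j) y = ∑ i ∈ Finset.range ⌊y⌋₊, ((i + 1 : ℕ) : ℝ) ^ j := by
  rw [summatory, ← Nat.range_succ_eq_Icc_zero, Finset.sum_range_succ', (realPow j).map_zero,
    add_zero]
  exact Finset.sum_congr rfl fun i _ => realPow_apply j i.succ_ne_zero

theorem pow_div_le_sum_range_succ_pow (j N : ℕ) :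
    (N : ℝ) ^ (j + 1) / (j + 1) ≤ ∑ i ∈ Finset.range N, ((i + 1 : ℕ) : ℝ) ^ j := by
  have hmono : MonotoneOn (fun x : ℝ => x ^ j) (Set.Icc 0 (0 + N)) := fun x hx y _ hxy =>
    pow_le_pow_left₀ hx.1 hxy j
  simpa using hmono.integral_le_sum

theorem sum_range_pow_le_pow_div (j N : ℕ) :
    ∑ i ∈ Finset.range N, (i : ℝ) ^ j ≤ (N : ℝ) ^ (j + 1) / (j + 1) := by
  have hmono : MonotoneOn (fun x : ℝ => x ^ j) (Set.Icc 0 (0 + N)) := fun x hx y _ hxy =>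
    pow_le_pow_left₀ hx.1 hxy j
  simpa using hmono.sum_le_integral

theorem abs_summatory_realPow_sub_le (j : ℕ) {y : ℝ} (hy : 0 ≤ y) :
    |summatory (realPow j) y - y ^ (j + 1) / (j + 1)| ≤ y ^ j := by
  have hfloor := Nat.floor_le hy
  have hpow : (⌊y⌋₊ : ℝ) ^ j ≤ y ^ j := pow_le_pow_left₀ (Nat.cast_nonneg _) hfloor j
  have hshift : ∑ i ∈ Finset.range ⌊y⌋₊, ((i + 1 : ℕ) : ℝ) ^ j ≤
      ∑ i ∈ Finset.range ⌊y⌋₊, (i : ℝ) ^ j + (⌊y⌋₊ : ℝ) ^ j := by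
    rw [← Finset.sum_range_succ, Finset.sum_range_succ' _ ⌊y⌋₊]
    exact le_add_of_nonneg_right (by positivity)
  have hgap : y ^ (j + 1) / (j + 1) - (⌊y⌋₊ : ℝ) ^ (j + 1) / (j + 1) ≤ y ^ j := by
    have h := (le_abs_self _).trans (abs_pow_sub_pow_le y ⌊y⌋₊ (j + 1))
    rw [abs_of_nonneg hy, Nat.abs_cast, max_eq_left hfloor, abs_of_nonneg (sub_nonneg.2 hfloor),
      Nat.add_sub_cancel, Nat.cast_succ] at h
    rw [← sub_div, div_le_iff₀ (by positivity), mul_comm (y ^ j)]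
    have hfract : y - ⌊y⌋₊ ≤ 1 := by linarith [Nat.lt_floor_add_one y]
    refine h.trans (mul_le_mul_of_nonneg_right ?_ (by positivity))
    exact mul_le_of_le_one_left (by positivity) hfract
  have hle : (⌊y⌋₊ : ℝ) ^ (j + 1) / (j + 1) ≤ y ^ (j + 1) / (j + 1) := by gcongr
  rw [summatory_realPow, abs_le]
  constructor <;>
    linarith [pow_div_le_sum_range_succ_pow j ⌊y⌋₊, sum_range_pow_le_pow_div j ⌊y⌋₊]

theorem hasLogExpansion_summatory_realPow (j : ℕ) :
    HasLogExpansion 0 (-1) fun y => y ^ (-(j + 1 : ℝ)) * summatory (realPow j) y := by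
  refine ⟨C (1 / (j + 1) : ℝ), (natDegree_C _).le, fun s hs => ?_⟩
  refine IsBigO.trans (.of_bound' ?_) (isBigO_rpow_of_exponent_le hs.le)
  refine eventually_principal.2 fun y (hy : 1 ≤ y) => ?_
  have hy₀ : 0 < y := zero_lt_one.trans_le hy
  have hpow (n : ℕ) : y ^ (-(n : ℝ)) = (y ^ n)⁻¹ := by
    rw [Real.rpow_neg hy₀.le, Real.rpow_natCast]
  have hsub : y ^ (-(j + 1 : ℝ)) * summatory (realPow j) y - 1 / (j + 1) =
      (y ^ (j + 1))⁻¹ * (summatory (realPow j) y - y ^ (j + 1) / (j + 1)) := by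
    rw [← Nat.cast_succ, hpow]
    field_simp
  rw [eval_C, hsub, norm_mul, Real.norm_of_nonneg (by positivity), Real.norm_eq_abs,
    Real.norm_of_nonneg (by positivity), Real.rpow_neg_one]
  calc (y ^ (j + 1))⁻¹ * |summatory (realPow j) y - y ^ (j + 1) / (j + 1)|
      ≤ (y ^ (j + 1))⁻¹ * y ^ j := by
        gcongr
        exact abs_summatory_realPow_sub_le j hy₀.le
    _ = y⁻¹ := by
        rw [pow_succ]
        field_simp

theorem summatory_sqLift (g : ArithmeticFunction ℝ) {y : ℝ} (hy : 0 ≤ y) :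
    summatory (sqLift g) y = summatory g (√y) := by
  have hinj : Set.InjOn (fun r : ℕ => r * r) (Finset.Icc 0 ⌊√y⌋₊) := fun _ _ _ _ h =>
    Nat.mul_self_inj.1 h
  have hle (r : ℕ) : r ≤ ⌊√y⌋₊ ↔ r * r ≤ ⌊y⌋₊ := by
    rw [Nat.le_floor_iff (Real.sqrt_nonneg y), Nat.le_floor_iff hy,
      Real.le_sqrt r.cast_nonneg hy, sq, ← Nat.cast_mul]
  calc summatory (sqLift g) y
      = ∑ n ∈ (Finset.Icc 0 ⌊√y⌋₊).image fun r => r * r, sqLift g n := by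
        refine (Finset.sum_subset (fun n hn => ?_) fun n hn hn' => sqLift_eq_zero g ?_).symm
        · obtain ⟨r, hr, rfl⟩ := Finset.mem_image.1 hn
          exact Finset.mem_Icc.2 ⟨Nat.zero_le _, (hle r).1 (Finset.mem_Icc.1 hr).2⟩
        · rintro ⟨r, rfl⟩
          exact hn' (Finset.mem_image_of_mem _
            (Finset.mem_Icc.2 ⟨Nat.zero_le _, (hle r).2 (Finset.mem_Icc.1 hn).2⟩))
    _ = summatory g (√y) := by
        rw [Finset.sum_image hinj]
        exact Finset.sum_congr rfl fun r _ => sqLift_mul_self g r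

theorem HasLogExpansion.summatory_sqLift {g : ArithmeticFunction ℝ} {d : ℕ} {e σ : ℝ}
    (hg : HasLogExpansion d e fun y => y ^ (-(2 * σ)) * summatory g y) :
    HasLogExpansion d (1 / 2 * e) fun y => y ^ (-σ) * summatory (sqLift g) y := by
  refine (hg.comp_rpow one_half_pos).congr fun y hy => ?_
  have hy₀ : 0 ≤ y := zero_le_one.trans hy
  rw [_root_.summatory_sqLift g hy₀, Real.sqrt_eq_rpow, ← Real.rpow_mul hy₀]
  ring_nf

theorem sqLift_nonneg {g : ArithmeticFunction ℝ} (hg : ∀ n, 0 ≤ g n) (n : ℕ) : 0 ≤ sqLift g n := by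
  by_cases hn : IsSquare n
  · obtain ⟨r, rfl⟩ := hn
    simpa only [sqLift_mul_self] using hg r
  · exact (sqLift_eq_zero g hn).ge

theorem mul_apply_nonneg {a b : ArithmeticFunction ℝ} (ha : ∀ n, 0 ≤ a n) (hb : ∀ n, 0 ≤ b n)
    (n : ℕ) : 0 ≤ (a * b) n := by
  rw [mul_apply]
  exact Finset.sum_nonneg fun x _ => mul_nonneg (ha x.1) (hb x.2)

theorem hasLogExpansion_summatory_mainFactor :
    HasLogExpansion 4 (-1 / 6) fun y => y ^ (-2 : ℝ) * summatory mainFactor y := by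
  have h₁ : HasLogExpansion 0 (-1) fun y => y ^ (-2 : ℝ) * summatory (realPow 1) y :=
    by simpa only [Nat.cast_one, one_add_one_eq_two] using hasLogExpansion_summatory_realPow 1
  have hexp : (3 : ℕ) + 1 = (2 * 2 : ℝ) := by norm_num
  have h₃ : HasLogExpansion 0 (1 / 2 * -1) fun y =>
      y ^ (-2 : ℝ) * summatory (sqLift (realPow 3)) y :=
    .summatory_sqLift <| by simpa only [hexp] using hasLogExpansion_summatory_realPow 3
  have hnonneg₁ := realPow_nonneg 1
  have hnonneg₂ := mul_apply_nonneg hnonneg₁ hnonneg₁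
  have h₂ := h₁.summatory_mul (κ := 1 / 2) hnonneg₁ hnonneg₁ h₁ (by norm_num) (by norm_num)
    (by norm_num) (by norm_num)
  have h₄ := h₂.summatory_mul (κ := 1 / 2) hnonneg₂ hnonneg₂ h₂ (by norm_num) (by norm_num)
    (by norm_num) (by norm_num)
  have h := h₄.summatory_mul (κ := 2 / 3) (mul_apply_nonneg hnonneg₂ hnonneg₂)
    (sqLift_nonneg (realPow_nonneg 3)) h₃ (by norm_num) (by norm_num) (by norm_num) (by norm_num)
  have hfactor : mainFactor =
      realPow 1 * realPow 1 * (realPow 1 * realPow 1) * sqLift (realPow 3) := by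
    rw [mainFactor]
    ring
  rw [hfactor]
  exact h.mono (by norm_num) (by norm_num)

theorem hasLogExpansion_summatory_atCubes_subgroupSum :
    HasLogExpansion 4 (-1 / 6) fun y =>
      y ^ (-2 : ℝ) * summatory (atCubes (subgroupSum : ArithmeticFunction ℝ)) y := by
  rw [← cofactor_mul_mainFactor]
  refine hasLogExpansion_summatory_mainFactor.summatory_mul_of_summable (fun s hs => ?_)
    (by norm_num)
  refine (summable_abs_cofactor_mul_rpow_neg (s := s + 2) (by linarith)).congr fun n => ?_
  obtain rfl | hn := n.eq_zero_or_pos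
  · simp
  rw [abs_mul, abs_of_nonneg (Real.rpow_nonneg n.cast_nonneg (-2)), neg_add,
    Real.rpow_add (mod_cast hn)]
  ring

end Conclusion

theorem stmt1_general : ∃ a : ℕ → ℝ, ∀ ε : ℝ, 0 < ε →
    (fun x : ℝ => (T₃ x : ℝ) -
        x ^ ((2 : ℝ) / 3) * ∑ j ∈ Finset.range 5, a j * Real.log x ^ j)
      =O[Filter.atTop] (fun x : ℝ => x ^ ((11 : ℝ) / 18 + ε)) := by
  obtain ⟨P, hP, hF⟩ := hasLogExpansion_summatory_atCubes_subgroupSum.comp_rpow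
    (κ := 1 / 3) (by norm_num)
  refine ⟨P.coeff, fun ε hε => ?_⟩
  have hbound := (isBigO_rpow_of_exponent_le (le_refl (2 / 3))).mul
    (hF (-1 / 18 + ε) (by linarith))
  refine (hbound.mono (Filter.le_principal_iff.2 (Filter.Ici_mem_atTop 1))).congr' ?_ ?_ <;>
    filter_upwards [Filter.eventually_gt_atTop 0] with x hx
  · have hT :
        summatory (atCubes (subgroupSum : ArithmeticFunction ℝ)) (x ^ (1 / 3 : ℝ)) = T₃ x := by
      simp only [T₃_eq_summatory hx.le, summatory, atCubes_apply, ArithmeticFunction.natCoe_apply,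
        Nat.cast_sum]
    have hcancel : x ^ (2 / 3 : ℝ) * (x ^ (1 / 3 : ℝ)) ^ (-2 : ℝ) = 1 := by
      rw [← Real.rpow_mul hx.le, ← Real.rpow_add hx]
      norm_num
    rw [hT, Polynomial.eval_eq_sum_range' (Nat.lt_succ_of_le hP), mul_sub, ← mul_assoc, hcancel,
      one_mul]
  · rw [← Real.rpow_add hx]
    ring_nf

theorem stmt1 : ∃ a : ℕ → ℝ, ∀ ε : ℝ, 0 < ε →
    (fun x : ℝ => (T₃ x : ℝ) -
        x ^ ((2 : ℝ) / 3) * ∑ j ∈ Finset.range 5, a j * Real.log x ^ j)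
      =O[Filter.atTop] (fun x : ℝ => x ^ ((5 : ℝ) / 8 + ε)) := by
  obtain ⟨a, h⟩ := stmt1_general
  exact ⟨a, fun ε hε => (h ε hε).trans <| (isBigO_rpow_of_exponent_le (by linarith)).mono <|
    Filter.le_principal_iff.2 (Filter.Ici_mem_atTop 1)⟩
end
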